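/- arXiv:1809.04146 — 13 statements merged into one kernel-verified Lean document; each statement's English description precedes it below -/
import Mathlib

section
/- Let ζ_1,…,ζ_n be vectors in R^d and let ζ̄ = (1/n) Σ_{i=1}^n ζ_i. Let S be a proper sampling over [n] with probability vector p, and let v ∈ R^n satisfy the ESO condition for S. Then E‖ Σ_{i∈S} ζ_i/(n p_i) − ζ̄ ‖² ≤ (1/n²) Σ_{i=1}^n (v_i/p_i) ‖ζ_i‖², where the expectation is over the random set S. -/
/-!
The estimator and its mean are compared coordinate by coordinate. With `a i = ζ i k / (n p i)`,
the `k`-th coordinate of `ζ̄` is the mean `∑ i, p i * a i` of the random sum `∑ i ∈ S, a i`, whose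
variance is the quadratic form of `P - p pᵀ` at `a`. The ESO condition bounds that form by
`∑ i, p i * v i * a i ^ 2`, and summing over `k` gives the claim.
-/

open scoped BigOperators

lemma sum_weight_mul_sum_mem {n : ℕ} (w : Finset (Fin n) → ℝ) (p : Fin n → ℝ)
    (hp : ∀ i, p i = ∑ S ∈ Finset.univ.filter (fun S : Finset (Fin n) => i ∈ S), w S)
    (a : Fin n → ℝ) :
    ∑ S, w S * ∑ i ∈ S, a i = ∑ i, p i * a i := by
  have h : ∀ S : Finset (Fin n), w S * ∑ i ∈ S, a i = ∑ i, if i ∈ S then w S * a i else 0 := by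
    intro S
    rw [Finset.mul_sum, Finset.sum_ite_mem, Finset.univ_inter]
  simp_rw [h]
  rw [Finset.sum_comm]
  refine Finset.sum_congr rfl fun i _ => ?_
  rw [hp, Finset.sum_mul, Finset.sum_filter]

lemma sum_weight_mul_sum_mem_sq {n : ℕ} (w : Finset (Fin n) → ℝ)
    (P : Matrix (Fin n) (Fin n) ℝ)
    (hP : ∀ i j, P i j =
      ∑ S ∈ Finset.univ.filter (fun S : Finset (Fin n) => i ∈ S ∧ j ∈ S), w S)
    (a : Fin n → ℝ) :
    ∑ S, w S * (∑ i ∈ S, a i) ^ 2 = ∑ i, ∑ j, P i j * (a i * a j) := by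
  have h : ∀ S : Finset (Fin n), w S * (∑ i ∈ S, a i) ^ 2 =
      ∑ i, ∑ j, if i ∈ S ∧ j ∈ S then w S * (a i * a j) else 0 := by
    intro S
    simp only [ite_and, Finset.sum_ite_irrel, Finset.sum_ite_mem, Finset.univ_inter,
      Finset.sum_const_zero]
    rw [sq, Finset.sum_mul_sum, Finset.mul_sum]
    simp_rw [Finset.mul_sum]
  simp_rw [h]
  rw [Finset.sum_comm]
  refine Finset.sum_congr rfl fun i _ => ?_
  rw [Finset.sum_comm]
  refine Finset.sum_congr rfl fun j _ => ?_
  rw [hP, Finset.sum_mul, Finset.sum_filter]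

/-- The scalar case: the variance of `∑ i ∈ S, a i` is the quadratic form of `P - p pᵀ` at `a`,
which the ESO condition bounds by a diagonal form. -/
lemma variance_sum_mem_le {n : ℕ}
    (w : Finset (Fin n) → ℝ) (hw1 : ∑ S, w S = 1)
    (p : Fin n → ℝ)
    (hp : ∀ i, p i = ∑ S ∈ Finset.univ.filter (fun S : Finset (Fin n) => i ∈ S), w S)
    (P : Matrix (Fin n) (Fin n) ℝ)
    (hP : ∀ i j, P i j =
      ∑ S ∈ Finset.univ.filter (fun S : Finset (Fin n) => i ∈ S ∧ j ∈ S), w S)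
    (v : Fin n → ℝ)
    (hESO : (Matrix.diagonal (fun i => p i * v i) -
      (P - Matrix.of fun i j => p i * p j)).PosSemidef)
    (a : Fin n → ℝ) :
    ∑ S, w S * ((∑ i ∈ S, a i) - ∑ i, p i * a i) ^ 2 ≤ ∑ i, p i * v i * a i ^ 2 := by
  set m := ∑ i, p i * a i with hm
  have h1 : ∑ S, w S * ((∑ i ∈ S, a i) - m) ^ 2 =
      ∑ i, ∑ j, P i j * (a i * a j) - m ^ 2 := by
    have : ∀ S : Finset (Fin n), w S * ((∑ i ∈ S, a i) - m) ^ 2 =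
        w S * (∑ i ∈ S, a i) ^ 2 - 2 * m * (w S * ∑ i ∈ S, a i) + m ^ 2 * w S := by
      intro S; ring
    simp_rw [this]
    rw [Finset.sum_add_distrib, Finset.sum_sub_distrib, ← Finset.mul_sum, ← Finset.mul_sum,
      sum_weight_mul_sum_mem_sq w P hP, sum_weight_mul_sum_mem w p hp, hw1, ← hm]
    ring
  have h2 : m ^ 2 = ∑ i, ∑ j, p i * p j * (a i * a j) := by
    rw [sq, hm, Finset.sum_mul_sum]
    exact Finset.sum_congr rfl fun i _ => Finset.sum_congr rfl fun j _ => by ring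
  have h3 := hESO.dotProduct_mulVec_nonneg a
  have h4 : star a ⬝ᵥ (Matrix.diagonal (fun i => p i * v i) -
      (P - Matrix.of fun i j => p i * p j)).mulVec a =
      ∑ i, p i * v i * a i ^ 2 - (∑ i, ∑ j, P i j * (a i * a j) -
        ∑ i, ∑ j, p i * p j * (a i * a j)) := by
    rw [Matrix.sub_mulVec, Matrix.sub_mulVec, dotProduct_sub, dotProduct_sub]
    simp only [dotProduct, Matrix.mulVec, Matrix.of_apply,
      Finset.mul_sum, star_trivial]
    congr 1
    · exact Finset.sum_congr rfl fun i _ => by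
        simp [Matrix.diagonal_apply]; ring
    · congr 1 <;>
      exact Finset.sum_congr rfl fun i _ => Finset.sum_congr rfl fun j _ => by ring
  rw [h4] at h3
  rw [h1, h2]
  linarith

/-- Lemma 1 (key lemma): variance upper bound for the importance-weighted estimator
under an arbitrary proper sampling satisfying the ESO condition. -/
theorem variance_upper_bound_arbitrary_sampling {n d : ℕ}
    (w : Finset (Fin n) → ℝ) (hw0 : ∀ S, 0 ≤ w S) (hw1 : ∑ S, w S = 1)
    (p : Fin n → ℝ)
    (hp : ∀ i, p i = ∑ S ∈ Finset.univ.filter (fun S : Finset (Fin n) => i ∈ S), w S)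
    (hproper : ∀ i, 0 < p i)
    (P : Matrix (Fin n) (Fin n) ℝ)
    (hP : ∀ i j, P i j =
      ∑ S ∈ Finset.univ.filter (fun S : Finset (Fin n) => i ∈ S ∧ j ∈ S), w S)
    (v : Fin n → ℝ)
    (hESO : (Matrix.diagonal (fun i => p i * v i) -
      (P - Matrix.of fun i j => p i * p j)).PosSemidef)
    (ζ : Fin n → EuclideanSpace ℝ (Fin d)) :
    ∑ S : Finset (Fin n), w S *
        ‖(∑ i ∈ S, ((n : ℝ) * p i)⁻¹ • ζ i) - (n : ℝ)⁻¹ • ∑ i, ζ i‖ ^ 2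
      ≤ (n : ℝ)⁻¹ ^ 2 * ∑ i, (v i / p i) * ‖ζ i‖ ^ 2 := by
  -- Also valid at `n = 0`, where `(n : ℝ)⁻¹ = 0` but there is no index `i`.
  have hmean : ∀ k i, p i * (((n : ℝ) * p i)⁻¹ * ζ i k) = (n : ℝ)⁻¹ * ζ i k := by
    intro k i
    have := (hproper i).ne'
    rw [mul_inv]
    field_simp
  have hcoord : ∀ S : Finset (Fin n),
      w S * ‖(∑ i ∈ S, ((n : ℝ) * p i)⁻¹ • ζ i) - (n : ℝ)⁻¹ • ∑ i, ζ i‖ ^ 2 =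
      ∑ k, w S * ((∑ i ∈ S, ((n : ℝ) * p i)⁻¹ * ζ i k) -
        ∑ i, p i * (((n : ℝ) * p i)⁻¹ * ζ i k)) ^ 2 := by
    intro S
    rw [EuclideanSpace.real_norm_sq_eq, Finset.mul_sum]
    simp_rw [hmean]
    simp [Finset.mul_sum]
  simp_rw [hcoord]
  rw [Finset.sum_comm]
  calc _ ≤ ∑ k, ∑ i, p i * v i * (((n : ℝ) * p i)⁻¹ * ζ i k) ^ 2 :=
        Finset.sum_le_sum fun k _ => variance_sum_mem_le w hw1 p hp P hP v hESO _
    _ = _ := by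
        rw [Finset.sum_comm, Finset.mul_sum]
        refine Finset.sum_congr rfl fun i _ => ?_
        rw [EuclideanSpace.real_norm_sq_eq, Finset.mul_sum, Finset.mul_sum]
        refine Finset.sum_congr rfl fun k _ => ?_
        have := (hproper i).ne'
        rw [mul_inv]
        field_simp
end

section
/- Let S be a proper sampling over [n] with probability vector p. If a vector v ∈ R^n satisfies the ESO condition for S, then necessarily v_i ≥ 1 − p_i for every i ∈ [n]. -/
open scoped BigOperators

/-- Any vector `v` satisfying the ESO condition for a proper sampling must satisfy
`v i ≥ 1 - p i` for all `i`. -/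
theorem eso_implies_v_ge_one_sub_p {n : ℕ}
    (w : Finset (Fin n) → ℝ) (hw0 : ∀ S, 0 ≤ w S) (hw1 : ∑ S, w S = 1)
    (p : Fin n → ℝ)
    (hp : ∀ i, p i = ∑ S ∈ Finset.univ.filter (fun S : Finset (Fin n) => i ∈ S), w S)
    (hproper : ∀ i, 0 < p i)
    (P : Matrix (Fin n) (Fin n) ℝ)
    (hP : ∀ i j, P i j =
      ∑ S ∈ Finset.univ.filter (fun S : Finset (Fin n) => i ∈ S ∧ j ∈ S), w S)
    (v : Fin n → ℝ)
    (hESO : (Matrix.diagonal (fun i => p i * v i) -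
      (P - Matrix.of fun i j => p i * p j)).PosSemidef) :
    ∀ i, 1 - p i ≤ v i := by
  intro i
  have hii : P i i = p i := by simp [hP i i, hp i]
  -- The `i`-th diagonal entry of the ESO matrix is `p i * v i - (p i - p i ^ 2)`.
  have h := hESO.diag_nonneg (i := i)
  simp only [Matrix.sub_apply, Matrix.diagonal_apply_eq, Matrix.of_apply, hii] at h
  have h' : p i * (1 - p i) ≤ p i * v i := by linarith
  exact le_of_mul_le_mul_left h' (hproper i)
end

section
/- Let S be an arbitrary proper sampling over [n] with probability vector p and probability matrix P. Then P − p p^⊤ ⪯ n·Diag(p_1(1−p_1), …, p_n(1−p_n)); in other words, the ESO condition for S holds with the choice v_i = n(1 − p_i) for all i. -/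
open scoped BigOperators

/-!
With `a i S = 1[i ∈ S] - p i`, the matrix `M = P - p pᵀ` is the covariance matrix
`M i j = ∑ S, w S * (a i S * a j S)`, whose diagonal is `p i * (1 - p i)`. By Cauchy–Schwarz,
`(∑ i, a i S * x i) ^ 2 ≤ n * ∑ i, (a i S * x i) ^ 2` for every `S`; averaging over `S` gives
`xᵀ M x ≤ n * ∑ i, M i i * x i ^ 2`, which is the claim.
-/

/-- The entries of `P - p pᵀ` are the covariances of the indicators of membership in `S`. -/
lemma prob_sub_eq_covariance {n : ℕ}
    (w : Finset (Fin n) → ℝ) (hw1 : ∑ S, w S = 1) (p : Fin n → ℝ)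
    (hp : ∀ i, p i = ∑ S ∈ Finset.univ.filter (fun S : Finset (Fin n) => i ∈ S), w S)
    (i j : Fin n) :
    (∑ S ∈ Finset.univ.filter (fun S : Finset (Fin n) => i ∈ S ∧ j ∈ S), w S) - p i * p j =
      ∑ S, w S * (((if i ∈ S then 1 else 0) - p i) * ((if j ∈ S then 1 else 0) - p j)) := by
  have hpi : ∀ i, ∑ S, w S * (if i ∈ S then 1 else 0) = p i := by
    intro i
    rw [hp i, Finset.sum_filter]
    simp
  have hexpand : ∀ S : Finset (Fin n),
      w S * (((if i ∈ S then 1 else 0) - p i) * ((if j ∈ S then 1 else 0) - p j)) =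
        (if i ∈ S ∧ j ∈ S then w S else 0) - p j * (w S * (if i ∈ S then 1 else 0))
          - p i * (w S * (if j ∈ S then 1 else 0)) + p i * p j * w S := by
    intro S
    by_cases hi : i ∈ S <;> by_cases hj : j ∈ S <;> simp [hi, hj] <;> ring
  simp_rw [hexpand]
  rw [Finset.sum_add_distrib, Finset.sum_sub_distrib, Finset.sum_sub_distrib,
    ← Finset.mul_sum, ← Finset.mul_sum, ← Finset.mul_sum, hpi, hpi, hw1, Finset.sum_filter]
  ring

/-- For an arbitrary proper sampling, the ESO condition always holds with the
choice `v i = n * (1 - p i)`, i.e. `P - p pᵀ ⪯ n · Diag(p i (1 - p i))`. -/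
theorem eso_holds_with_n_one_sub_p {n : ℕ}
    (w : Finset (Fin n) → ℝ) (hw0 : ∀ S, 0 ≤ w S) (hw1 : ∑ S, w S = 1)
    (p : Fin n → ℝ)
    (hp : ∀ i, p i = ∑ S ∈ Finset.univ.filter (fun S : Finset (Fin n) => i ∈ S), w S)
    (hproper : ∀ i, 0 < p i)
    (P : Matrix (Fin n) (Fin n) ℝ)
    (hP : ∀ i j, P i j =
      ∑ S ∈ Finset.univ.filter (fun S : Finset (Fin n) => i ∈ S ∧ j ∈ S), w S) :
    (Matrix.diagonal (fun i => p i * ((n : ℝ) * (1 - p i))) -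
      (P - Matrix.of fun i j => p i * p j)).PosSemidef := by
  set a : Fin n → Finset (Fin n) → ℝ := fun i S => (if i ∈ S then 1 else 0) - p i with ha
  have hM : ∀ i j, P i j - p i * p j = ∑ S, w S * (a i S * a j S) := by
    intro i j
    rw [hP, prob_sub_eq_covariance w hw1 p hp]
  have hdiag : ∀ i, p i * (1 - p i) = ∑ S, w S * (a i S * a i S) := by
    intro i
    have hPii : P i i = p i := by rw [hP, hp]; simp
    rw [← hM, hPii]
    ring
  have hMat : P - Matrix.of (fun i j => p i * p j) =
      Matrix.of fun i j => ∑ S, w S * (a i S * a j S) := by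
    ext i j
    simp [← hM]
  rw [hMat]
  refine Matrix.PosSemidef.of_dotProduct_mulVec_nonneg ?_ fun x => ?_
  · refine (Matrix.isHermitian_diagonal _).sub ?_
    ext i j
    simp [mul_comm (a i _)]
  · have hquad : x ⬝ᵥ (Matrix.of fun i j => ∑ S, w S * (a i S * a j S)).mulVec x =
        ∑ S, w S * (∑ i, a i S * x i) ^ 2 := by
      simp only [dotProduct, Matrix.mulVec, Matrix.of_apply, sq, Finset.sum_mul_sum,
        Finset.mul_sum, Finset.sum_mul]
      rw [Finset.sum_comm' (t' := Finset.univ) (s' := fun _ => Finset.univ) (by simp)]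
      simp_rw [Finset.sum_comm (s := (Finset.univ : Finset (Fin n)))
        (t := (Finset.univ : Finset (Finset (Fin n))))]
      refine Finset.sum_congr rfl fun S _ => ?_
      rw [Finset.sum_comm]
      refine Finset.sum_congr rfl fun i _ => Finset.sum_congr rfl fun j _ => ?_
      ring
    have hd : x ⬝ᵥ (Matrix.diagonal (fun i => p i * ((n : ℝ) * (1 - p i)))).mulVec x =
        ∑ S, w S * (n * ∑ i, (a i S * x i) ^ 2) := by
      simp only [dotProduct, Matrix.mulVec_diagonal, Finset.mul_sum]
      rw [Finset.sum_comm]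
      refine Finset.sum_congr rfl fun i _ => ?_
      calc x i * (p i * ((n : ℝ) * (1 - p i)) * x i)
          = (p i * (1 - p i)) * (n * x i ^ 2) := by ring
        _ = _ := by
          rw [hdiag, Finset.sum_mul]
          exact Finset.sum_congr rfl fun S _ => by ring
    rw [star_trivial, Matrix.sub_mulVec, dotProduct_sub, hquad, hd, sub_nonneg]
    refine Finset.sum_le_sum fun S _ => mul_le_mul_of_nonneg_left ?_ (hw0 S)
    simpa using sq_sum_le_card_mul_sum_sq (s := Finset.univ) (f := fun i => a i S * x i)
end

section
/- Let 1 ≤ b ≤ n and let S be the b-nice sampling over [n], i.e. S is chosen uniformly at random among all subsets of [n] of cardinality b. Then its probability matrix P satisfies P_{ii} = b/n for all i and P_{ij} = b(b−1)/(n(n−1)) for all i ≠ j, and the ESO condition for S holds with the constant choice v_i = (n−b)/(n−1) for all i. -/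
/-!
A fixed set `T` of size `t ≤ b` lies in exactly `(n - t).choose (b - t)` of the `n.choose b`
subsets of size `b`; taking `t = 1, 2` gives the entries of `P` (for `b = 1` no sampled set
contains two distinct points, and the formula gives `0`). With these values every entry of
`Diag(p v) - (P - p pᵀ)`, diagonal or not, equals the same number
`c = b (n - b) / (n² (n - 1)) ≥ 0`, so this matrix is `c` times the all-ones matrix `1 1ᵀ`.
For `n = 1` the convention `x / 0 = 0` makes `v` and `c` vanish, and the identity still holds.
-/

open scoped BigOperators

/-- The probability that the `b`-nice sampling contains a fixed set `T` with `#T ≤ b`. -/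
lemma sum_nice_weight_superset {n b : ℕ} (w : Finset (Fin n) → ℝ)
    (hw : ∀ S : Finset (Fin n), w S = if S.card = b then ((n.choose b : ℝ))⁻¹ else 0)
    (T : Finset (Fin n)) (hT : T.card ≤ b) :
    ∑ S ∈ Finset.univ.filter (fun S : Finset (Fin n) => T ⊆ S), w S =
      ((n - T.card).choose (b - T.card) : ℝ) / (n.choose b : ℝ) := by
  have h := Finset.card_filter_powersetCard_subset T Finset.univ b (Finset.subset_univ _) hT
  rw [Finset.card_univ, Fintype.card_fin] at h
  have hset : (Finset.univ.filter (fun S : Finset (Fin n) => T ⊆ S)).filter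
      (fun S => S.card = b) = (Finset.univ.powersetCard b).filter (fun S => T ⊆ S) := by
    ext S
    simp [and_comm]
  simp_rw [hw]
  rw [← Finset.sum_filter, hset, Finset.sum_const, h, nsmul_eq_mul, div_eq_mul_inv]

/-- For the `b`-nice sampling (uniform over subsets of cardinality `b`), the
probability matrix has entries `b/n` on the diagonal and `b(b-1)/(n(n-1))` off
the diagonal, and the ESO condition holds with `v i = (n-b)/(n-1)`. -/
theorem b_nice_sampling_probability_matrix_and_eso {n : ℕ} (b : ℕ)
    (hb1 : 1 ≤ b) (hbn : b ≤ n)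
    (w : Finset (Fin n) → ℝ)
    (hw : ∀ S : Finset (Fin n), w S = if S.card = b then ((n.choose b : ℝ))⁻¹ else 0)
    (p : Fin n → ℝ)
    (hp : ∀ i, p i = ∑ S ∈ Finset.univ.filter (fun S : Finset (Fin n) => i ∈ S), w S)
    (P : Matrix (Fin n) (Fin n) ℝ)
    (hP : ∀ i j, P i j =
      ∑ S ∈ Finset.univ.filter (fun S : Finset (Fin n) => i ∈ S ∧ j ∈ S), w S) :
    (∀ i, P i i = (b : ℝ) / n) ∧
    (∀ i j, i ≠ j → P i j = ((b : ℝ) * ((b : ℝ) - 1)) / ((n : ℝ) * ((n : ℝ) - 1))) ∧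
    (Matrix.diagonal (fun i => p i * (((n : ℝ) - b) / ((n : ℝ) - 1))) -
      (P - Matrix.of fun i j => p i * p j)).PosSemidef := by
  obtain ⟨m, rfl⟩ : ∃ m, n = m + 1 := ⟨n - 1, by omega⟩
  obtain ⟨a, rfl⟩ : ∃ a, b = a + 1 := ⟨b - 1, by omega⟩
  have hchoose : ((m + 1).choose (a + 1) : ℝ) ≠ 0 := by
    exact_mod_cast (Nat.choose_pos hbn).ne'
  have hstep : ((m : ℝ) + 1) * (m.choose a : ℝ) = ((m + 1).choose (a + 1) : ℝ) * (a + 1) := by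
    exact_mod_cast Nat.add_one_mul_choose_eq m a
  have hm : (m : ℝ) + 1 ≠ 0 := by positivity
  have hpv : ∀ i, p i = ((a + 1 : ℕ) : ℝ) / ((m + 1 : ℕ) : ℝ) := by
    intro i
    have h := sum_nice_weight_superset w hw {i} (by simp)
    simp only [Finset.singleton_subset_iff, Finset.card_singleton, Nat.add_sub_cancel] at h
    rw [hp, h]
    push_cast
    rw [div_eq_div_iff hchoose hm]
    linarith
  have hdiag : ∀ i, P i i = ((a + 1 : ℕ) : ℝ) / ((m + 1 : ℕ) : ℝ) := by
    intro i
    rw [← hpv i, hP, hp]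
    simp only [and_self]
  have hoff : ∀ i j, i ≠ j → P i j = (((a + 1 : ℕ) : ℝ) * (((a + 1 : ℕ) : ℝ) - 1)) /
      (((m + 1 : ℕ) : ℝ) * (((m + 1 : ℕ) : ℝ) - 1)) := by
    intro i j hij
    rw [hP]
    rcases a with _ | a
    · -- Here `b = 1`, and every set containing both `i` and `j` has weight `0`.
      rw [Finset.sum_eq_zero]
      · simp
      · intro S hS
        rw [hw, if_neg]
        intro hcard
        obtain ⟨x, rfl⟩ := Finset.card_eq_one.1 hcard
        simp only [Finset.mem_filter, Finset.mem_singleton] at hS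
        exact hij (hS.2.1.trans hS.2.2.symm)
    · obtain ⟨k, rfl⟩ : ∃ k, m = k + 1 := ⟨m - 1, by omega⟩
      have hc : ({i, j} : Finset (Fin (k + 1 + 1))).card = 2 := Finset.card_pair hij
      have h := sum_nice_weight_superset w hw {i, j} (by omega)
      simp only [Finset.insert_subset_iff, Finset.singleton_subset_iff, hc] at h
      rw [h, show k + 1 + 1 - 2 = k by omega, show a + 1 + 1 - 2 = a by omega]
      have hstep' : ((k : ℝ) + 1) * (k.choose a : ℝ) =
          ((k + 1).choose (a + 1) : ℝ) * (a + 1) := by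
        exact_mod_cast Nat.add_one_mul_choose_eq k a
      have hk : (k : ℝ) + 1 ≠ 0 := by positivity
      push_cast at hstep hm ⊢
      rw [div_eq_div_iff hchoose (mul_ne_zero hm (by simpa using hk))]
      linear_combination ((k : ℝ) + 1 + 1) * hstep' + ((a : ℝ) + 1) * hstep
  refine ⟨hdiag, hoff, ?_⟩
  have hle : (a : ℝ) ≤ m := by exact_mod_cast Nat.le_of_succ_le_succ hbn
  -- All entries of the matrix agree, so it is a nonnegative multiple of `1 1ᵀ`.
  have hmat : Matrix.diagonal (fun i => p i * ((((m + 1 : ℕ) : ℝ) - ((a + 1 : ℕ) : ℝ)) /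
        (((m + 1 : ℕ) : ℝ) - 1))) - (P - Matrix.of fun i j => p i * p j) =
      (((a : ℝ) + 1) * ((m : ℝ) - a) / (((m : ℝ) + 1) ^ 2 * m)) •
        Matrix.vecMulVec (1 : Fin (m + 1) → ℝ) (star 1) := by
    ext i j
    rcases Nat.eq_zero_or_pos m with rfl | hmpos
    · obtain rfl : a = 0 := by omega
      obtain rfl : i = j := Fin.ext (by omega)
      simp [hdiag, hpv]
    · have hm0 : (m : ℝ) ≠ 0 := by exact_mod_cast hmpos.ne'
      by_cases hij : i = j
      · subst hij
        simp [hdiag, hpv]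
        field_simp
        ring
      · simp [hoff i j hij, hpv, hij]
        field_simp
        ring
  rw [hmat]
  refine (Matrix.posSemidef_vecMulVec_self_star _).smul ?_
  have : (0 : ℝ) ≤ (m : ℝ) - a := by linarith
  positivity
end

section
/- Let 1 ≤ k ≤ n, p_1,…,p_k ∈ (0,1), p_{k+1} = ⋯ = p_n = 1, and let 1 ≤ a ≤ k be an integer with k·p_i ≤ a for all i ≤ k. Consider the approximate independent sampling S^a: first draw a subset S' of [k] of cardinality a uniformly at random, then include each i ∈ S' independently with probability k p_i / a, and finally add all indices i > k; let S be the resulting random subset of [n]. Then Prob(i ∈ S) = p_i for every i, Prob({i,j} ⊆ S) = ((a−1)k/(a(k−1))) p_i p_j for all i ≠ j with i,j ≤ k, and, setting s = (k−a)/(a(k−1)), the ESO condition for S holds with v_i = 1 − p_i(1 − s) for i ≤ k and v_i = 0 for i > k. -/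
/-!
For a set `J` of indices write `J' = {i ∈ J : i < k}` and `r i = k p i / a`. Conditioning on the
uniform `a`-subset `S'`, the set `J` lies in the sample exactly when `J' ⊆ S'` and all elements
of `J'` are kept, which by independence has conditional probability `∏_{i ∈ J'} r i`
(`sum_keep_prod`, `sum_samples_given_base`). The event `J' ⊆ S'` has probability
`choose a |J'| / choose k |J'|` (`count_supersets`). Hence
`Prob(J ⊆ S) = choose a |J'| / choose k |J'| * ∏_{i ∈ J'} r i` (`inclusion_prob`).
Taking `|J'| = 0, 1, 2` gives every entry of `P`.

With these entries `Diag(p v) - (P - p pᵀ)` is the rank-one matrix `s q qᵀ`, where `q i = p i` for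
`i < k` and `q i = 0` otherwise; it is positive semidefinite because `s ≥ 0`.
-/

open scoped BigOperators

/-- If each `i ∈ S` is kept independently with probability `r i`, all of `J ⊆ S` is kept with
probability `∏ i ∈ J, r i`. -/
lemma sum_keep_prod {ι : Type*} [DecidableEq ι] (r : ι → ℝ) (S J : Finset ι) (hJ : J ⊆ S) :
    ∑ U ∈ S.powerset, (if J ⊆ U then ∏ i ∈ S, (if i ∈ U then r i else 1 - r i) else 0) =
      ∏ i ∈ J, r i := by
  -- Dropping an element of `J` gets weight `0`, so that `Finset.prod_add` performs the sum.
  have h := Finset.prod_add r (fun i => if i ∈ J then 0 else 1 - r i) S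
  have h2 : ∏ i ∈ S, (r i + if i ∈ J then 0 else 1 - r i) = ∏ i ∈ J, r i := by
    rw [← Finset.prod_subset hJ]
    · exact Finset.prod_congr rfl fun i hi => by simp [hi]
    · intro i _ hi
      simp [hi]
  rw [← h2, h]
  refine Finset.sum_congr rfl fun U hU => ?_
  rw [Finset.mem_powerset] at hU
  split_ifs with hJU
  · rw [← Finset.prod_sdiff hU, mul_comm]
    congr 1
    · exact Finset.prod_congr rfl fun i hi => by simp [hi]
    · refine Finset.prod_congr rfl fun i hi => ?_
      rw [Finset.mem_sdiff] at hi
      have : i ∉ J := fun h => hi.2 (hJU h)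
      simp [hi.2, this]
  · obtain ⟨i, hiJ, hiU⟩ := Finset.not_subset.mp hJU
    rw [Finset.prod_eq_zero (i := i) (Finset.mem_sdiff.mpr ⟨hJ hiJ, hiU⟩) (by simp [hiJ]),
      mul_zero]

/-- The probability, given that the first stage drew the set `S`, that the sample contains `J`. The
samples `T` possible given `S` are the subsets of `S` joined with all indices `i ≥ k`, which
reduces the sum to `sum_keep_prod`. -/
lemma sum_samples_given_base {n : ℕ} (k : ℕ) (r : Fin n → ℝ) (S J : Finset (Fin n))
    (hS : ∀ i ∈ S, (i : ℕ) < k) :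
    ∑ T ∈ Finset.univ.filter (fun T : Finset (Fin n) => J ⊆ T),
      (if ∀ i : Fin n, k ≤ (i : ℕ) → i ∈ T then
        (if T.filter (fun i : Fin n => (i : ℕ) < k) ⊆ S then
          ∏ i ∈ S, (if i ∈ T then r i else 1 - r i) else 0) else 0) =
    if J.filter (fun i : Fin n => (i : ℕ) < k) ⊆ S then
      ∏ i ∈ J.filter (fun i : Fin n => (i : ℕ) < k), r i else 0 := by
  split_ifs with hJ
  · rw [← sum_keep_prod r S _ hJ]
    simp only [← Finset.sum_filter]
    refine Finset.sum_nbij' (fun T => T.filter (fun i : Fin n => (i : ℕ) < k))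
      (fun U => U ∪ Finset.univ.filter (fun i : Fin n => k ≤ (i : ℕ))) ?_ ?_ ?_ ?_ ?_
    · intro T hT
      simp only [Finset.mem_filter, Finset.mem_univ, true_and, Finset.mem_powerset] at hT ⊢
      exact ⟨hT.2, Finset.filter_subset_filter _ hT.1.1⟩
    · intro U hU
      simp only [Finset.mem_filter, Finset.mem_univ, true_and, Finset.mem_powerset] at hU ⊢
      grind
    · intro T hT
      simp only [Finset.mem_filter, Finset.mem_univ, true_and] at hT
      grind
    · intro U hU
      simp only [Finset.mem_filter, Finset.mem_powerset] at hU
      grind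
    · intro T hT
      refine Finset.prod_congr rfl fun i hi => ?_
      simp [hS i hi]
  · refine Finset.sum_eq_zero fun T hT => ?_
    simp only [Finset.mem_filter, Finset.mem_univ, true_and] at hT
    rw [if_neg (c := T.filter (fun i : Fin n => (i : ℕ) < k) ⊆ S), ite_self]
    exact fun h => hJ ((Finset.filter_subset_filter _ hT).trans h)

/-- The event `J ⊆ S'`, for a uniform `a`-subset `S'` of `K`, has probability
`choose a |J| / choose |K| |J|`; stated without division so that `a < |J|` is covered. -/
lemma count_supersets {ι : Type*} [DecidableEq ι] (K J : Finset ι) (a : ℕ) (hJ : J ⊆ K) :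
    ((K.powersetCard a).filter (J ⊆ ·)).card * K.card.choose J.card =
      K.card.choose a * a.choose J.card := by
  rcases le_or_gt J.card a with h | h
  · rw [Finset.card_filter_powersetCard_subset J K a hJ h, Nat.choose_mul h, mul_comm]
  · rw [Nat.choose_eq_zero_of_lt h, Finset.card_eq_zero.mpr, zero_mul, mul_zero]
    refine Finset.filter_eq_empty_iff.mpr fun S hS hJS => ?_
    have := Finset.card_le_card hJS
    rw [(Finset.mem_powersetCard.mp hS).2] at this
    omega

/-- The inclusion probability of an arbitrary index set `J`. -/
lemma inclusion_prob {n : ℕ} (k a : ℕ) (hkn : k ≤ n) (hak : a ≤ k) (r : Fin n → ℝ)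
    (w : Finset (Fin n) → ℝ)
    (hw : ∀ T : Finset (Fin n),
      w T = if ∀ i : Fin n, k ≤ (i : ℕ) → i ∈ T then
        ∑ S' ∈ Finset.univ.filter
            (fun S' : Finset (Fin n) => S'.card = a ∧ ∀ i ∈ S', (i : ℕ) < k),
          (if T.filter (fun i : Fin n => (i : ℕ) < k) ⊆ S' then
            ((k.choose a : ℝ))⁻¹ * ∏ i ∈ S', (if i ∈ T then r i else 1 - r i)
          else 0)
      else 0) (J J' : Finset (Fin n))
    (hJ : J.filter (fun i : Fin n => (i : ℕ) < k) = J') :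
    ∑ T ∈ Finset.univ.filter (fun T : Finset (Fin n) => J ⊆ T), w T =
      (a.choose J'.card : ℝ) / (k.choose J'.card : ℝ) * ∏ i ∈ J', r i := by
  set K : Finset (Fin n) := Finset.univ.filter (fun i : Fin n => (i : ℕ) < k) with hK
  have hKcard : K.card = k := by
    rw [hK, Fin.card_filter_val_lt]
    omega
  have hfam : Finset.univ.filter
      (fun S' : Finset (Fin n) => S'.card = a ∧ ∀ i ∈ S', (i : ℕ) < k) = K.powersetCard a := by
    ext S
    simp only [Finset.mem_filter, Finset.mem_univ, true_and, Finset.mem_powersetCard, hK,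
      Finset.subset_iff]
    tauto
  have hJK : J' ⊆ K := by
    rw [← hJ]
    exact Finset.filter_subset_filter _ (Finset.subset_univ _)
  have hw' : ∀ T, w T = ∑ S' ∈ K.powersetCard a, (k.choose a : ℝ)⁻¹ *
      (if ∀ i : Fin n, k ≤ (i : ℕ) → i ∈ T then
        (if T.filter (fun i : Fin n => (i : ℕ) < k) ⊆ S' then
          ∏ i ∈ S', (if i ∈ T then r i else 1 - r i) else 0) else 0) := by
    intro T
    rw [hw, hfam]
    split_ifs with h
    · exact Finset.sum_congr rfl fun S' _ => by split_ifs <;> simp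
    · simp
  have hsum : ∀ S' ∈ K.powersetCard a,
      ∑ T ∈ Finset.univ.filter (fun T : Finset (Fin n) => J ⊆ T), (k.choose a : ℝ)⁻¹ *
      (if ∀ i : Fin n, k ≤ (i : ℕ) → i ∈ T then
        (if T.filter (fun i : Fin n => (i : ℕ) < k) ⊆ S' then
          ∏ i ∈ S', (if i ∈ T then r i else 1 - r i) else 0) else 0) =
      (k.choose a : ℝ)⁻¹ * (if J' ⊆ S' then ∏ i ∈ J', r i else 0) := by
    intro S' hS'
    rw [← Finset.mul_sum, sum_samples_given_base k r S' J, hJ]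
    intro i hi
    have := (Finset.mem_powersetCard.mp hS').1 hi
    simpa [hK] using this
  simp only [hw']
  rw [Finset.sum_comm, Finset.sum_congr rfl hsum, ← Finset.mul_sum, ← Finset.sum_filter,
    Finset.sum_const, nsmul_eq_mul]
  have hc := count_supersets K J' a hJK
  have hle := Finset.card_le_card hJK
  rw [hKcard] at hc hle
  have hcount : (((K.powersetCard a).filter (J' ⊆ ·)).card : ℝ) * (k.choose J'.card : ℝ) =
      (k.choose a : ℝ) * (a.choose J'.card : ℝ) := by exact_mod_cast hc
  have h1 : (k.choose a : ℝ) ≠ 0 := by exact_mod_cast (Nat.choose_pos hak).ne'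
  have h2 : (k.choose J'.card : ℝ) ≠ 0 := by exact_mod_cast (Nat.choose_pos hle).ne'
  field_simp
  linear_combination (∏ i ∈ J', r i) * hcount

/-- Approximate independent sampling: first a uniformly random subset `S'` of the
first `k` indices of cardinality `a` is drawn, then each `i ∈ S'` is kept
independently with probability `k p i / a`, and all indices `i ≥ k` (those with
`p i = 1`) are added. Its marginals are `p i`, its off-diagonal pairwise
probabilities on the first `k` indices equal `((a-1)k/(a(k-1))) p i p j`, and the
ESO condition holds with `v i = 1 - p i (1 - s)` for `i < k` (`s = (k-a)/(a(k-1))`)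
and `v i = 0` for `i ≥ k`. -/
theorem approximate_independent_sampling_marginals_and_eso {n : ℕ} (k a : ℕ)
    (hk1 : 1 ≤ k) (hkn : k ≤ n) (ha1 : 1 ≤ a) (hak : a ≤ k)
    (p : Fin n → ℝ)
    (hpk : ∀ i : Fin n, (i : ℕ) < k → 0 < p i ∧ p i < 1)
    (hpn : ∀ i : Fin n, k ≤ (i : ℕ) → p i = 1)
    (hpa : ∀ i : Fin n, (i : ℕ) < k → (k : ℝ) * p i ≤ a)
    (w : Finset (Fin n) → ℝ)
    (hw : ∀ T : Finset (Fin n),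
      w T = if ∀ i : Fin n, k ≤ (i : ℕ) → i ∈ T then
        ∑ S' ∈ Finset.univ.filter
            (fun S' : Finset (Fin n) => S'.card = a ∧ ∀ i ∈ S', (i : ℕ) < k),
          (if T.filter (fun i : Fin n => (i : ℕ) < k) ⊆ S' then
            ((k.choose a : ℝ))⁻¹ *
              ∏ i ∈ S', (if i ∈ T then (k : ℝ) * p i / a else 1 - (k : ℝ) * p i / a)
          else 0)
      else 0)
    (P : Matrix (Fin n) (Fin n) ℝ)
    (hP : ∀ i j, P i j =
      ∑ S ∈ Finset.univ.filter (fun S : Finset (Fin n) => i ∈ S ∧ j ∈ S), w S)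
    (s : ℝ) (hs : s = ((k : ℝ) - a) / ((a : ℝ) * ((k : ℝ) - 1)))
    (v : Fin n → ℝ)
    (hv : ∀ i : Fin n, v i = if (i : ℕ) < k then 1 - p i * (1 - s) else 0) :
    (∀ i, P i i = p i) ∧
    (∀ i j : Fin n, i ≠ j → (i : ℕ) < k → (j : ℕ) < k →
      P i j = (((a : ℝ) - 1) * k / ((a : ℝ) * ((k : ℝ) - 1))) * (p i * p j)) ∧
    (Matrix.diagonal (fun i => p i * v i) -
      (P - Matrix.of fun i j => p i * p j)).PosSemidef := by
  have ha0 : (a : ℝ) ≠ 0 := by positivity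
  have hk0 : (k : ℝ) ≠ 0 := by positivity
  have key : ∀ (i j : Fin n) (J' : Finset (Fin n)),
      ({i, j} : Finset (Fin n)).filter (fun i : Fin n => (i : ℕ) < k) = J' →
      P i j = (a.choose J'.card : ℝ) / (k.choose J'.card : ℝ) *
        ∏ i ∈ J', ((k : ℝ) * p i / a) := by
    intro i j J' hJ'
    rw [hP, ← inclusion_prob k a hkn hak (fun i => (k : ℝ) * p i / a) w hw {i, j} J' hJ']
    simp only [Finset.insert_subset_iff, Finset.singleton_subset_iff]
  have hdiag : ∀ i, P i i = p i := by
    intro i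
    by_cases hi : (i : ℕ) < k
    · rw [key i i {i} (by ext x; simp; grind)]
      simp
      field_simp
    · rw [key i i ∅ (by ext x; simp; grind), hpn i (by omega)]
      simp
  have htail : ∀ i j : Fin n, k ≤ (i : ℕ) → P i j = p j := by
    intro i j hi
    by_cases hj : (j : ℕ) < k
    · rw [key i j {j} (by ext x; simp; grind)]
      simp
      field_simp
    · rw [key i j ∅ (by ext x; simp; grind), hpn j (by omega)]
      simp
  have hsymm : ∀ i j : Fin n, P i j = P j i := by
    intro i j
    rw [hP, hP]
    simp only [and_comm]
  have hoff : ∀ i j : Fin n, i ≠ j → (i : ℕ) < k → (j : ℕ) < k →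
      P i j = (((a : ℝ) - 1) * k / ((a : ℝ) * ((k : ℝ) - 1))) * (p i * p j) := by
    intro i j hij hi hj
    have hk2 : 2 ≤ k := by
      have : (i : ℕ) ≠ j := fun h => hij (Fin.ext h)
      omega
    have hk1' : (k : ℝ) - 1 ≠ 0 := by
      have : (2 : ℝ) ≤ k := by exact_mod_cast hk2
      linarith
    rw [key i j {i, j} (by ext x; simp; grind), Finset.card_pair hij, Finset.prod_pair hij,
      Nat.cast_choose_two, Nat.cast_choose_two]
    field_simp
  refine ⟨hdiag, hoff, ?_⟩
  have hs0 : 0 ≤ s := by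
    have h1 : (1 : ℝ) ≤ k := by exact_mod_cast hk1
    have h2 : (a : ℝ) ≤ k := by exact_mod_cast hak
    rw [hs]
    exact div_nonneg (by linarith) (mul_nonneg (by positivity) (by linarith))
  have hmat : Matrix.diagonal (fun i => p i * v i) - (P - Matrix.of fun i j => p i * p j) =
      s • Matrix.vecMulVec (fun i : Fin n => if (i : ℕ) < k then p i else 0)
        (star (fun i : Fin n => if (i : ℕ) < k then p i else 0)) := by
    ext i j
    simp only [Matrix.sub_apply, Matrix.of_apply, Matrix.smul_apply, Matrix.vecMulVec_apply,
      star_trivial, smul_eq_mul]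
    by_cases hi : (i : ℕ) < k
    · by_cases hj : (j : ℕ) < k
      · by_cases hij : i = j
        · subst hij
          rw [Matrix.diagonal_apply_eq, hdiag, hv, if_pos hi, if_pos hi]
          ring
        · have hk2 : (2 : ℝ) ≤ k := by
            have : (i : ℕ) ≠ j := fun h => hij (Fin.ext h)
            exact_mod_cast (by omega : 2 ≤ k)
          have hk1' : (k : ℝ) - 1 ≠ 0 := by linarith
          rw [Matrix.diagonal_apply_ne _ hij, hoff i j hij hi hj, if_pos hi, if_pos hj, hs]
          field_simp
          ring
      · have hij : i ≠ j := by rintro rfl; exact hj hi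
        rw [Matrix.diagonal_apply_ne _ hij, hsymm, htail j i (by omega), hpn j (by omega),
          if_neg hj]
        ring
    · rw [htail i j (by omega), hpn i (by omega), if_neg hi]
      by_cases hij : i = j
      · subst hij
        rw [Matrix.diagonal_apply_eq, hv, if_neg hi]
        ring
      · rw [Matrix.diagonal_apply_ne _ hij]
        ring
  rw [hmat]
  exact (Matrix.posSemidef_vecMulVec_self_star _).smul hs0
end

section
/- Let 0 < L_1 ≤ L_2 ≤ ⋯ ≤ L_n be positive reals and let 0 < b ≤ n. Let k be the largest integer in [1,n] satisfying 0 < b + k − n ≤ (Σ_{i=1}^k L_i)/L_k (assume such k exists). Define p* ∈ R^n by p*_i = (b + k − n)·L_i / (Σ_{j=1}^k L_j) for i ≤ k and p*_i = 1 for i > k. Then p* is feasible, i.e. Σ_{i=1}^n p*_i = b and 0 < p*_i ≤ 1 for all i, and p* minimizes Ω(p) = Σ_{i=1}^n L_i²/p_i over the feasible set {p ∈ R^n : Σ_{i=1}^n p_i = b, 0 < p_i ≤ 1 for all i}; that is, Σ_{i=1}^n L_i²/p*_i ≤ Σ_{i=1}^n L_i²/p_i for every feasible p. -/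
/-!
Write `S = ∑_{i<k} L i`, `c = b + k - n` and `t = S / c`, so that `p*_i = L i / t` for `i < k`.
Admissibility of `k` says `L i ≤ t` for `i < k`, while failure of admissibility at `k + 1`
says `t < L i` for `i ≥ k`. Hence `t ^ 2` is a Lagrange multiplier for the constraint
`∑ p i = b`: by convexity of `x ↦ 1 / x`, each term satisfies
`L i ^ 2 / p*_i - t ^ 2 * (p i - p*_i) ≤ L i ^ 2 / p i` (with slack coming from `p i ≤ 1`
when `i ≥ k`), and summing over `i` makes the linear terms cancel.
-/

open scoped BigOperators


/-- The tangent line of `x ↦ a ^ 2 / x` at `q` lies below the graph. -/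
lemma tangent_le_sq_div {a p q : ℝ} (hp : 0 < p) (hq : 0 < q) :
    a ^ 2 / q - (a / q) ^ 2 * (p - q) ≤ a ^ 2 / p := by
  have h : a ^ 2 / p - (a ^ 2 / q - (a / q) ^ 2 * (p - q)) = (a / q) ^ 2 * (p - q) ^ 2 / p := by
    field_simp
    ring
  have : 0 ≤ (a / q) ^ 2 * (p - q) ^ 2 / p := by positivity
  linarith

lemma card_filter_val_lt {n k : ℕ} (hkn : k ≤ n) :
    (Finset.univ.filter (fun i : Fin n => (i : ℕ) < k)).card = k := by
  rw [Fin.card_filter_val_lt, min_eq_right hkn]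

lemma sum_filter_val_lt_succ {n k : ℕ} (f : Fin n → ℝ) (hk : k < n) :
    ∑ i ∈ Finset.univ.filter (fun i : Fin n => (i : ℕ) < k + 1), f i =
      (∑ i ∈ Finset.univ.filter (fun i : Fin n => (i : ℕ) < k), f i) + f ⟨k, hk⟩ := by
  have h : Finset.univ.filter (fun i : Fin n => (i : ℕ) < k + 1) =
      insert ⟨k, hk⟩ (Finset.univ.filter (fun i : Fin n => (i : ℕ) < k)) := by
    ext i
    simp only [Finset.mem_filter, Finset.mem_univ, true_and, Finset.mem_insert, Fin.ext_iff]
    omega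
  rw [h, Finset.sum_insert (by simp), add_comm]

/-- Lemma on the optimal probabilities: `p*` defined from the largest admissible `k`
is feasible and minimizes `Ω(p) = Σ L i ^ 2 / p i` over all probability vectors
with sum `b` and entries in `(0,1]`. -/
theorem optimal_probabilities_minimize_omega {n : ℕ} (hn : 0 < n)
    (L : Fin n → ℝ) (hLpos : ∀ i, 0 < L i) (hLmono : Monotone L)
    (b : ℝ) (hb0 : 0 < b) (hbn : b ≤ n)
    (k : ℕ) (hk1 : 1 ≤ k) (hkn : k ≤ n)
    (hkcond : 0 < b + k - n ∧
      b + k - n ≤ (∑ i ∈ Finset.univ.filter (fun i : Fin n => (i : ℕ) < k), L i) /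
        L ⟨k - 1, by omega⟩)
    (hkmax : ∀ k' : ℕ, ∀ _hk' : k < k', ∀ _hk'n : k' ≤ n,
      ¬ (0 < b + k' - n ∧
        b + k' - n ≤ (∑ i ∈ Finset.univ.filter (fun i : Fin n => (i : ℕ) < k'), L i) /
          L ⟨k' - 1, by omega⟩))
    (pstar : Fin n → ℝ)
    (hpstar : ∀ i : Fin n, pstar i =
      if (i : ℕ) < k then
        (b + k - n) * L i / (∑ j ∈ Finset.univ.filter (fun j : Fin n => (j : ℕ) < k), L j)
      else 1) :
    (∑ i, pstar i = b) ∧ (∀ i, 0 < pstar i ∧ pstar i ≤ 1) ∧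
    (∀ p : Fin n → ℝ, (∑ i, p i = b) → (∀ i, 0 < p i ∧ p i ≤ 1) →
      ∑ i, L i ^ 2 / pstar i ≤ ∑ i, L i ^ 2 / p i) := by
  obtain ⟨hc, hcS⟩ := hkcond
  have hS : 0 < ∑ i ∈ Finset.univ.filter (fun i : Fin n => (i : ℕ) < k), L i :=
    Finset.sum_pos (fun i _ => hLpos i) ⟨⟨0, hn⟩, by simp; omega⟩
  have hsucc := fun hk : k < n => sum_filter_val_lt_succ L hk
  set S := ∑ i ∈ Finset.univ.filter (fun i : Fin n => (i : ℕ) < k), L i with hSdef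
  set c := b + k - n with hcdef
  have hlow : ∀ i : Fin n, (i : ℕ) < k → c * L i ≤ S := fun i hi => by
    have h1 : L i ≤ L ⟨k - 1, by omega⟩ := hLmono (Fin.le_def.2 (by simp; omega))
    rw [le_div_iff₀ (hLpos _)] at hcS
    exact (mul_le_mul_of_nonneg_left h1 hc.le).trans hcS
  have hhigh : ∀ i : Fin n, ¬ (i : ℕ) < k → S ≤ c * L i := fun i hi => by
    have hk : k < n := by omega
    have h1 : L ⟨k, hk⟩ ≤ L i := hLmono (Fin.le_def.2 (by simp; omega))
    have h2 := hkmax (k + 1) (by omega) (by omega)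
    rw [hsucc hk] at h2
    simp only [Nat.add_sub_cancel, not_and, not_le] at h2
    push_cast at h2
    have h3 := h2 (by linarith)
    rw [div_lt_iff₀ (hLpos _)] at h3
    have h4 : b + ((k : ℝ) + 1) - n = c + 1 := by rw [hcdef]; ring
    rw [h4] at h3
    have h5 := mul_le_mul_of_nonneg_left h1 hc.le
    linarith
  have hsum : ∑ i, pstar i = b := by
    have hcard := Finset.card_filter_add_card_filter_not (s := (Finset.univ : Finset (Fin n)))
      (fun i : Fin n => (i : ℕ) < k)
    rw [card_filter_val_lt hkn, Finset.card_univ, Fintype.card_fin] at hcard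
    have hcard' := congrArg (Nat.cast : ℕ → ℝ) hcard
    push_cast at hcard'
    simp only [hpstar]
    rw [Finset.sum_ite, ← Finset.sum_div, ← Finset.mul_sum, ← hSdef, mul_div_assoc,
      div_self hS.ne', Finset.sum_const, nsmul_eq_mul]
    linarith
  have hpos : ∀ i, 0 < pstar i := fun i => by
    rw [hpstar]
    split_ifs
    · have := hLpos i
      positivity
    · exact one_pos
  refine ⟨hsum, fun i => ⟨hpos i, ?_⟩, fun p hp hp01 => ?_⟩
  · rw [hpstar]
    split_ifs with hi
    · rw [div_le_one hS]
      exact hlow i hi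
    · exact le_rfl
  · have key : ∀ i, L i ^ 2 / pstar i - (S / c) ^ 2 * (p i - pstar i) ≤ L i ^ 2 / p i := fun i => by
      have htan := tangent_le_sq_div (a := L i) (hp01 i).1 (hpos i)
      by_cases hi : (i : ℕ) < k
      · have hratio : L i / pstar i = S / c := by
          have := (hLpos i).ne'
          rw [hpstar, if_pos hi]
          field_simp
        rwa [hratio] at htan
      · have hp1 : pstar i = 1 := by rw [hpstar, if_neg hi]
        rw [hp1, div_one] at htan ⊢
        have ht : S / c ≤ L i := by
          rw [div_le_iff₀ hc]
          linarith [hhigh i hi]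
        have ht2 : (S / c) ^ 2 ≤ L i ^ 2 := pow_le_pow_left₀ (by positivity) ht 2
        rw [div_one] at htan
        nlinarith [(hp01 i).2]
    have htot := Finset.sum_le_sum fun i (_ : i ∈ Finset.univ) => key i
    rw [Finset.sum_sub_distrib, ← Finset.mul_sum, Finset.sum_sub_distrib, hp, hsum] at htot
    linarith
end

section
/- Let 0 < L_1 ≤ L_2 ≤ ⋯ ≤ L_n be positive reals and let 0 < b ≤ n. Let k be the largest integer in [1,n] satisfying 0 < b + k − n ≤ (Σ_{i=1}^k L_i)/L_k (assume such k exists), and define p* ∈ R^n by p*_i = (b + k − n)·L_i / (Σ_{j=1}^k L_j) for i ≤ k and p*_i = 1 for i > k. Then for every p ∈ R^n with Σ_{i=1}^n p_i = b and 0 < p_i ≤ 1 for all i, and for every v ∈ R^n with v_i ≥ 1 − p_i for all i, one has Σ_{i=1}^n v_i L_i²/p_i ≥ Σ_{i=1}^n (1 − p*_i) L_i²/p*_i. Consequently, among all proper samplings of expected minibatch size b, the independent sampling with probabilities p* (for which the ESO condition holds with equality and v_i = 1 − p*_i) minimizes the quantity Σ_{i=1}^n v_i L_i²/p_i. -/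
/-!
The inequality `v i ≥ 1 - p i` reduces the claim to minimizing the convex function
`∑ (1 - p i) * L i ^ 2 / p i` over the simplex slice `∑ p i = b`, `0 < p i ≤ 1`, and `p*` is the
KKT point of this problem.  With `S = ∑_{i < k} L i`, `c = b + k - n` and `T = S / c`, the multiplier
of the constraint `∑ p i = b` is `T ^ 2`: for each `i`,
`(1 - p* i) * L i ^ 2 / p* i ≤ (1 - p i) * L i ^ 2 / p i + T ^ 2 * (p i - p* i)`,
and summing over `i` gives the result because `∑ p i = ∑ p* i = b`.

For `i < k` one has `p* i = L i / T` and this is the tangent-line bound `pointwise_interior`.  For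
`i ≥ k` one has `p* i = 1` and the bound `pointwise_boundary` requires `T ≤ L i`; this is what the
maximality of `k` provides, through the failure of the condition on `k` at `k + 1`, together with the
monotonicity of `L`.
-/

open scoped BigOperators

/-- The tangent line of the convex function `q ↦ (1 - q) * L ^ 2 / q` at `q = L / T`, where its slope
is `-T ^ 2`, lies below the function. -/
lemma pointwise_interior {L T p : ℝ} (hL : 0 < L) (hT : 0 < T) (hp : 0 < p) :
    (1 - L / T) * L ^ 2 / (L / T) ≤ (1 - p) * L ^ 2 / p + T ^ 2 * (p - L / T) := by
  have h : (1 - p) * L ^ 2 / p + T ^ 2 * (p - L / T) - (1 - L / T) * L ^ 2 / (L / T)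
      = (L - T * p) ^ 2 / p := by
    field_simp
    ring
  have h2 : 0 ≤ (L - T * p) ^ 2 / p := by positivity
  linarith

/-- At the boundary value `q = 1` of `q ↦ (1 - q) * L ^ 2 / q`, every slope `-T ^ 2` with `T ≤ L`
is admissible for a supporting line over `(0, 1]`. -/
lemma pointwise_boundary {L T p : ℝ} (hT : 0 < T) (hTL : T ≤ L) (hp : 0 < p) (hp1 : p ≤ 1) :
    0 ≤ (1 - p) * L ^ 2 / p + T ^ 2 * (p - 1) := by
  have h1 : T ^ 2 ≤ L ^ 2 := by gcongr
  have h2 : L ^ 2 ≤ L ^ 2 / p := le_div_self (sq_nonneg L) hp hp1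
  have h3 : 0 ≤ (1 - p) * (L ^ 2 / p - T ^ 2) := mul_nonneg (by linarith) (by linarith)
  have h4 : (1 - p) * L ^ 2 / p + T ^ 2 * (p - 1) = (1 - p) * (L ^ 2 / p - T ^ 2) := by ring
  linarith

/-- Optimality of the independent sampling with probabilities `p*`: for any
feasible probability vector `p` and any ESO-admissible `v` (which necessarily
satisfies `v i ≥ 1 - p i`), the quantity `Σ v i L i ^ 2 / p i` is at least its
value for the independent sampling with probabilities `p*`, where `v i = 1 - p* i`. -/
theorem independent_sampling_with_pstar_is_optimal {n : ℕ} (hn : 0 < n)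
    (L : Fin n → ℝ) (hLpos : ∀ i, 0 < L i) (hLmono : Monotone L)
    (b : ℝ) (hb0 : 0 < b) (hbn : b ≤ n)
    (k : ℕ) (hk1 : 1 ≤ k) (hkn : k ≤ n)
    (hkcond : 0 < b + k - n ∧
      b + k - n ≤ (∑ i ∈ Finset.univ.filter (fun i : Fin n => (i : ℕ) < k), L i) /
        L ⟨k - 1, by omega⟩)
    (hkmax : ∀ k' : ℕ, ∀ _hk' : k < k', ∀ _hk'n : k' ≤ n,
      ¬ (0 < b + k' - n ∧
        b + k' - n ≤ (∑ i ∈ Finset.univ.filter (fun i : Fin n => (i : ℕ) < k'), L i) /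
          L ⟨k' - 1, by omega⟩))
    (pstar : Fin n → ℝ)
    (hpstar : ∀ i : Fin n, pstar i =
      if (i : ℕ) < k then
        (b + k - n) * L i / (∑ j ∈ Finset.univ.filter (fun j : Fin n => (j : ℕ) < k), L j)
      else 1) :
    ∀ p : Fin n → ℝ, (∑ i, p i = b) → (∀ i, 0 < p i ∧ p i ≤ 1) →
      ∀ v : Fin n → ℝ, (∀ i, 1 - p i ≤ v i) →
        ∑ i, (1 - pstar i) * L i ^ 2 / pstar i ≤ ∑ i, v i * L i ^ 2 / p i := by
  intro p hpsum hp v hv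
  obtain ⟨hc, -⟩ := hkcond
  set S := ∑ j ∈ Finset.univ.filter (fun j : Fin n => (j : ℕ) < k), L j with hS
  have hSpos : 0 < S :=
    Finset.sum_pos (fun i _ => hLpos i) ⟨⟨0, hn⟩, by simp; omega⟩
  set c := b + k - n with hcdef
  have hT : 0 < S / c := div_pos hSpos hc
  have hTL : ∀ i : Fin n, ¬ (i : ℕ) < k → S / c ≤ L i := by
    intro i hi
    have hkn' : k < n := by omega
    have hmax := hkmax (k + 1) (by omega) (by omega)
    have hset : Finset.univ.filter (fun j : Fin n => (j : ℕ) < k + 1)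
        = insert ⟨k, hkn'⟩ (Finset.univ.filter (fun j : Fin n => (j : ℕ) < k)) := by
      ext j
      simp only [Finset.mem_filter, Finset.mem_univ, true_and, Finset.mem_insert, Fin.ext_iff]
      omega
    rw [hset, Finset.sum_insert (by simp), ← hS] at hmax
    simp only [Nat.add_sub_cancel] at hmax
    push_cast at hmax
    have hLk := hLpos ⟨k, hkn'⟩
    -- The first inequality holds at `k + 1`, so the second one fails there.
    have hlt : (L ⟨k, hkn'⟩ + S) / L ⟨k, hkn'⟩ < c + 1 := by
      by_contra! hle
      exact hmax ⟨by linarith, by linarith⟩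
    rw [div_lt_iff₀ hLk] at hlt
    have hle : S / c ≤ L ⟨k, hkn'⟩ := by
      rw [div_le_iff₀ hc]
      linarith
    exact hle.trans (hLmono (by rw [Fin.le_def]; simp only; omega))
  have hsumstar : ∑ i, pstar i = b := by
    have hcard : (Finset.univ.filter (fun j : Fin n => (j : ℕ) < k)).card = k := by
      rw [Fin.card_filter_val_lt]
      omega
    have hcard' : ((Finset.univ.filter (fun j : Fin n => ¬ (j : ℕ) < k)).card : ℝ) = n - k := by
      have h := Finset.card_filter_add_card_filter_not (s := (Finset.univ : Finset (Fin n)))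
        (fun j : Fin n => (j : ℕ) < k)
      rw [hcard, Finset.card_univ, Fintype.card_fin] at h
      have h' : (k : ℝ) + ((Finset.univ.filter (fun j : Fin n => ¬ (j : ℕ) < k)).card : ℝ) = n := by
        exact_mod_cast h
      linarith
    simp_rw [hpstar]
    rw [Finset.sum_ite, ← Finset.sum_div, ← Finset.mul_sum, ← hS, Finset.sum_const, nsmul_eq_mul,
      hcard', mul_div_cancel_right₀ _ hSpos.ne']
    linarith
  have hpoint : ∀ i, (1 - pstar i) * L i ^ 2 / pstar i
      ≤ v i * L i ^ 2 / p i + (S / c) ^ 2 * (p i - pstar i) := by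
    intro i
    have hv' : (1 - p i) * L i ^ 2 / p i ≤ v i * L i ^ 2 / p i := by
      have := (hp i).1
      have := hv i
      gcongr
    by_cases hi : (i : ℕ) < k
    · have hps : pstar i = L i / (S / c) := by
        rw [hpstar, if_pos hi]
        field_simp
      have := pointwise_interior (hLpos i) hT (hp i).1
      rw [hps]
      linarith
    · have hps : pstar i = 1 := by rw [hpstar, if_neg hi]
      have := pointwise_boundary hT (hTL i hi) (hp i).1 (hp i).2
      rw [hps]
      simp only [sub_self, zero_mul, zero_div]
      linarith
  calc ∑ i, (1 - pstar i) * L i ^ 2 / pstar i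
      ≤ ∑ i, (v i * L i ^ 2 / p i + (S / c) ^ 2 * (p i - pstar i)) :=
        Finset.sum_le_sum fun i _ => hpoint i
    _ = ∑ i, v i * L i ^ 2 / p i := by
        rw [Finset.sum_add_distrib, ← Finset.mul_sum, Finset.sum_sub_distrib, hpsum, hsumstar,
          sub_self, mul_zero, add_zero]
end

section
/- Let L_1,…,L_n > 0, let 0 < b ≤ n, assume b·max_i L_i ≤ Σ_{i=1}^n L_i, and set p_i = b·L_i/(Σ_{j=1}^n L_j), so p_i ∈ (0,1] and Σ_i p_i = b. With L̄ = (1/n) Σ_{i=1}^n L_i, the quantity α for the independent sampling with these probabilities satisfies α_{S*} := (b/n²)·Σ_{i=1}^n (1−p_i) L_i²/p_i / L̄² = 1 − b·(Σ_{i=1}^n L_i²)/(Σ_{i=1}^n L_i)², and this quantity is at most (n−b)/n. -/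
/-!
Write `S = ∑ L i` and `Q = ∑ L i ^ 2`. Substituting `p i = b * L i / S` gives
`∑ (1 - p i) * L i ^ 2 / p i = S ^ 2 / b - Q`, and dividing by `n ^ 2 * Lbar ^ 2 = S ^ 2` yields
the formula for `α`. The upper bound is the Cauchy–Schwarz inequality `S ^ 2 ≤ n * Q`.
-/

open scoped BigOperators

/-- Value of `α` for the independent sampling with probabilities proportional to the
smoothness constants: if `b · max_i L i ≤ Σ L i` and `p i = b L i / Σ L j`, then
`α = 1 - b (Σ L i ^ 2) / (Σ L i) ^ 2 ≤ (n - b)/n`. -/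
theorem alpha_independent_sampling_importance {n : ℕ} (hn : 0 < n)
    (L : Fin n → ℝ) (hLpos : ∀ i, 0 < L i)
    (b : ℝ) (hb0 : 0 < b) (hbn : b ≤ n)
    (hmax : b * (Finset.univ.sup' ⟨⟨0, hn⟩, Finset.mem_univ _⟩ L) ≤ ∑ j, L j)
    (p : Fin n → ℝ) (hp : ∀ i, p i = b * L i / ∑ j, L j)
    (Lbar : ℝ) (hLbar : Lbar = (n : ℝ)⁻¹ * ∑ i, L i) :
    (∀ i, 0 < p i ∧ p i ≤ 1) ∧ (∑ i, p i = b) ∧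
    (b / (n : ℝ) ^ 2) * (∑ i, (1 - p i) * L i ^ 2 / p i) / Lbar ^ 2
      = 1 - b * (∑ i, L i ^ 2) / (∑ i, L i) ^ 2 ∧
    1 - b * (∑ i, L i ^ 2) / (∑ i, L i) ^ 2 ≤ ((n : ℝ) - b) / n := by
  have hn' : (0 : ℝ) < n := by exact_mod_cast hn
  have hS : 0 < ∑ j, L j :=
    Finset.sum_pos (fun i _ => hLpos i) ⟨⟨0, hn⟩, Finset.mem_univ _⟩
  have hCS : (∑ i, L i) ^ 2 ≤ n * ∑ i, L i ^ 2 := by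
    simpa using sq_sum_le_card_mul_sum_sq (s := Finset.univ) (f := L)
  -- Since `p i = b * L i / S`, each summand `(1 - p i) * L i ^ 2 / p i` is `L i * S / b - L i ^ 2`.
  have hsum : ∑ i, (1 - p i) * L i ^ 2 / p i = (∑ i, L i) ^ 2 / b - ∑ i, L i ^ 2 := by
    have hterm : ∀ i, (1 - p i) * L i ^ 2 / p i = L i * ((∑ j, L j) / b) - L i ^ 2 := by
      intro i
      have hLi := hLpos i
      rw [hp i]
      generalize ∑ j, L j = S at hS
      field_simp
    simp_rw [hterm]
    rw [Finset.sum_sub_distrib, ← Finset.sum_mul]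
    ring
  refine ⟨fun i => ⟨?_, ?_⟩, ?_, ?_, ?_⟩
  · rw [hp i]
    exact div_pos (mul_pos hb0 (hLpos i)) hS
  · rw [hp i, div_le_one hS]
    exact (mul_le_mul_of_nonneg_left (Finset.le_sup' L (Finset.mem_univ i)) hb0.le).trans hmax
  · simp_rw [hp]
    rw [← Finset.sum_div, ← Finset.mul_sum]
    exact mul_div_cancel_right₀ b hS.ne'
  · rw [hsum, hLbar]
    generalize ∑ j, L j = S at hS
    field_simp
  · have hle : b / n ≤ b * (∑ i, L i ^ 2) / (∑ i, L i) ^ 2 := by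
      rw [div_le_div_iff₀ hn' (pow_pos hS 2), mul_assoc, mul_comm _ (n : ℝ)]
      exact mul_le_mul_of_nonneg_left hCS hb0.le
    rw [sub_div, div_self hn'.ne']
    linarith
end

section
/- Let each f_i : R^d → R be differentiable with L_i-Lipschitz gradient and let f = (1/n) Σ_{i=1}^n f_i. Let S be a proper sampling over [n] with probability vector p, let v ∈ R^n satisfy the ESO condition for S, and set b = Σ_i p_i and K = (b/n²) Σ_{i=1}^n v_i L_i²/p_i. Then for any points x, x̃ ∈ R^d, the SVRG stochastic gradient estimator w := Σ_{i∈S} (∇f_i(x) − ∇f_i(x̃))/(n p_i) + ∇f(x̃) satisfies E‖w‖² ≤ 2‖∇f(x)‖² + (2K/b)·‖x − x̃‖², where the expectation is over the random set S. -/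
/-!
Write `a i = (n p_i)⁻¹ (∇f_i(x) - ∇f_i(x̃))` and `c = ∇F(x̃)`, so that the estimator is
`Y + c` with `Y = ∑_{i ∈ S} a i`. Then `E Y = ∑ p_i a_i = ∇F(x) - ∇F(x̃)`, so the estimator has
mean `∇F(x)`, and the bias-variance decomposition gives
`E‖Y + c‖² = ‖∇F(x)‖² + ∑_{i,j} (P - p pᵀ)_{ij} ⟪a i, a j⟫`.
The ESO condition bounds the last term by `∑ p_i v_i ‖a i‖²` (`sampling_second_moment_le`, obtained
by summing the scalar inequality `sampling_second_moment_le_real` over coordinates), and the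
Lipschitz bounds on the gradients turn this into `(K / b) ‖x - x̃‖²`. Both this
last step and inserting the slack factors `2` of the claim use `v ≥ 0`, which follows from the
diagonal of the ESO condition (`eso_nonneg`).
-/

open scoped BigOperators

/-- Bias-variance decomposition of a sampled sum of reals, with the variance bounded through the
ESO condition. -/
lemma sampling_second_moment_le_real {n : ℕ}
    (w : Finset (Fin n) → ℝ) (hw1 : ∑ S, w S = 1)
    (p : Fin n → ℝ)
    (hp : ∀ i, p i = ∑ S ∈ Finset.univ.filter (fun S : Finset (Fin n) => i ∈ S), w S)
    (P : Matrix (Fin n) (Fin n) ℝ)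
    (hP : ∀ i j, P i j =
      ∑ S ∈ Finset.univ.filter (fun S : Finset (Fin n) => i ∈ S ∧ j ∈ S), w S)
    (v : Fin n → ℝ)
    (hESO : (Matrix.diagonal (fun i => p i * v i) -
      (P - Matrix.of fun i j => p i * p j)).PosSemidef)
    (a : Fin n → ℝ) (c : ℝ) :
    ∑ S : Finset (Fin n), w S * ((∑ i ∈ S, a i) + c) ^ 2
      ≤ ((∑ i, p i * a i) + c) ^ 2 + ∑ i, p i * v i * a i ^ 2 := by
  have hmean : ∑ S : Finset (Fin n), w S * (∑ i ∈ S, a i) = ∑ i, p i * a i := by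
    simp_rw [hp, Finset.sum_filter, Finset.sum_mul, Finset.mul_sum]
    rw [Finset.sum_comm]
    refine Finset.sum_congr rfl fun S _ => ?_
    simp
  have hsq : ∑ S : Finset (Fin n), w S * (∑ i ∈ S, a i) ^ 2
      = ∑ i, ∑ j, P i j * (a i * a j) := by
    have hS : ∀ S : Finset (Fin n), w S * (∑ i ∈ S, a i) ^ 2
        = ∑ i, ∑ j, (if i ∈ S ∧ j ∈ S then w S else 0) * (a i * a j) := by
      intro S
      have h1 : ∑ i ∈ S, a i = ∑ i, if i ∈ S then a i else 0 := by simp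
      rw [h1, sq, Finset.sum_mul_sum, Finset.mul_sum]
      refine Finset.sum_congr rfl fun i _ => ?_
      rw [Finset.mul_sum]
      refine Finset.sum_congr rfl fun j _ => ?_
      by_cases hi : i ∈ S <;> by_cases hj : j ∈ S <;> simp [hi, hj]
    simp_rw [hS]
    rw [Finset.sum_comm]
    refine Finset.sum_congr rfl fun i _ => ?_
    rw [Finset.sum_comm]
    refine Finset.sum_congr rfl fun j _ => ?_
    rw [← Finset.sum_mul, hP, Finset.sum_filter]
  have hquad : ∑ i, ∑ j, P i j * (a i * a j)
      ≤ (∑ i, p i * a i) ^ 2 + ∑ i, p i * v i * a i ^ 2 := by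
    have h := hESO.dotProduct_mulVec_nonneg a
    have hexp : star a ⬝ᵥ (Matrix.diagonal (fun i => p i * v i) -
        (P - Matrix.of fun i j => p i * p j)).mulVec a
        = ∑ i, p i * v i * a i ^ 2 - (∑ i, ∑ j, P i j * (a i * a j)
          - (∑ i, p i * a i) ^ 2) := by
      rw [sq (∑ i, p i * a i), Finset.sum_mul_sum, ← Finset.sum_sub_distrib,
        ← Finset.sum_sub_distrib, dotProduct]
      refine Finset.sum_congr rfl fun i _ => ?_
      rw [Matrix.sub_mulVec, Pi.sub_apply, Matrix.mulVec_diagonal, Matrix.mulVec, dotProduct,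
        ← Finset.sum_sub_distrib, mul_sub, Finset.mul_sum]
      simp only [Pi.star_apply, star_trivial, Matrix.sub_apply, Matrix.of_apply]
      congr 1
      · ring
      · exact Finset.sum_congr rfl fun j _ => by ring
    rw [hexp] at h
    linarith
  calc ∑ S : Finset (Fin n), w S * ((∑ i ∈ S, a i) + c) ^ 2
      = ∑ S : Finset (Fin n), w S * (∑ i ∈ S, a i) ^ 2
        + 2 * c * ∑ S : Finset (Fin n), w S * (∑ i ∈ S, a i)
        + c ^ 2 * ∑ S : Finset (Fin n), w S := by
        rw [Finset.mul_sum, Finset.mul_sum, ← Finset.sum_add_distrib, ← Finset.sum_add_distrib]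
        exact Finset.sum_congr rfl fun S _ => by ring
    _ ≤ _ := by
        rw [hmean, hsq, hw1]
        linarith

lemma sampling_second_moment_le {n d : ℕ}
    (w : Finset (Fin n) → ℝ) (hw1 : ∑ S, w S = 1)
    (p : Fin n → ℝ)
    (hp : ∀ i, p i = ∑ S ∈ Finset.univ.filter (fun S : Finset (Fin n) => i ∈ S), w S)
    (P : Matrix (Fin n) (Fin n) ℝ)
    (hP : ∀ i j, P i j =
      ∑ S ∈ Finset.univ.filter (fun S : Finset (Fin n) => i ∈ S ∧ j ∈ S), w S)
    (v : Fin n → ℝ)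
    (hESO : (Matrix.diagonal (fun i => p i * v i) -
      (P - Matrix.of fun i j => p i * p j)).PosSemidef)
    (a : Fin n → EuclideanSpace ℝ (Fin d)) (c : EuclideanSpace ℝ (Fin d)) :
    ∑ S : Finset (Fin n), w S * ‖(∑ i ∈ S, a i) + c‖ ^ 2
      ≤ ‖(∑ i, p i • a i) + c‖ ^ 2 + ∑ i, p i * v i * ‖a i‖ ^ 2 := by
  have h := Finset.sum_le_sum fun k (_ : k ∈ (Finset.univ : Finset (Fin d))) =>
    sampling_second_moment_le_real w hw1 p hp P hP v hESO (fun i => a i k) (c k)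
  simp only [EuclideanSpace.real_norm_sq_eq, PiLp.add_apply, WithLp.ofLp_sum, Finset.sum_apply,
    PiLp.smul_apply, smul_eq_mul, Finset.mul_sum]
  rw [Finset.sum_comm, Finset.sum_comm (s := (Finset.univ : Finset (Fin n))),
    ← Finset.sum_add_distrib]
  exact h

/-- The diagonal of the ESO condition reads `p_i - p_i² ≤ p_i v_i`, and `p_i ≤ 1`. -/
lemma eso_nonneg {n : ℕ}
    (w : Finset (Fin n) → ℝ) (hw0 : ∀ S, 0 ≤ w S) (hw1 : ∑ S, w S = 1)
    (p : Fin n → ℝ)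
    (hp : ∀ i, p i = ∑ S ∈ Finset.univ.filter (fun S : Finset (Fin n) => i ∈ S), w S)
    (hproper : ∀ i, 0 < p i)
    (P : Matrix (Fin n) (Fin n) ℝ)
    (hP : ∀ i j, P i j =
      ∑ S ∈ Finset.univ.filter (fun S : Finset (Fin n) => i ∈ S ∧ j ∈ S), w S)
    (v : Fin n → ℝ)
    (hESO : (Matrix.diagonal (fun i => p i * v i) -
      (P - Matrix.of fun i j => p i * p j)).PosSemidef) (i : Fin n) : 0 ≤ v i := by
  have h : 0 ≤ (Matrix.diagonal (fun i => p i * v i) -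
      (P - Matrix.of fun i j => p i * p j)) i i := hESO.diag_nonneg
  have hPi : P i i = p i := by simp [hP, hp]
  have hle : p i ≤ 1 := by
    rw [hp, ← hw1]
    exact Finset.sum_le_sum_of_subset_of_nonneg (Finset.filter_subset _ _) fun S _ _ => hw0 S
  simp only [Matrix.sub_apply, Matrix.diagonal_apply_eq, Matrix.of_apply, hPi] at h
  have hpi := hproper i
  have h2 : 0 ≤ p i * v i := by nlinarith
  exact nonneg_of_mul_nonneg_right h2 hpi

lemma gradient_average {n d : ℕ} (f : Fin n → EuclideanSpace ℝ (Fin d) → ℝ)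
    (hdiff : ∀ i, Differentiable ℝ (f i)) (y : EuclideanSpace ℝ (Fin d)) :
    gradient (fun y => (n : ℝ)⁻¹ * ∑ i, f i y) y = (n : ℝ)⁻¹ • ∑ i, gradient (f i) y := by
  have h : HasFDerivAt (fun y => (n : ℝ)⁻¹ * ∑ i, f i y)
      ((n : ℝ)⁻¹ • ∑ i, fderiv ℝ (f i) y) y :=
    (HasFDerivAt.fun_sum fun i _ => (hdiff i y).hasFDerivAt).const_mul _
  simp only [gradient, h.fderiv, map_smul, map_sum]

/-- Variance bound for the minibatch SVRG gradient estimator under arbitrary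
sampling (Lemma on the SVRG variance): `E‖w‖² ≤ 2‖∇f(x)‖² + (2K/b)‖x - x̃‖²`. -/
theorem svrg_estimator_second_moment_bound {n d : ℕ}
    (f : Fin n → EuclideanSpace ℝ (Fin d) → ℝ)
    (L : Fin n → ℝ) (hL : ∀ i, 0 ≤ L i)
    (hdiff : ∀ i, Differentiable ℝ (f i))
    (hlip : ∀ i x y, ‖gradient (f i) x - gradient (f i) y‖ ≤ L i * ‖x - y‖)
    (F : EuclideanSpace ℝ (Fin d) → ℝ)
    (hF : F = fun y => (n : ℝ)⁻¹ * ∑ i, f i y)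
    (w : Finset (Fin n) → ℝ) (hw0 : ∀ S, 0 ≤ w S) (hw1 : ∑ S, w S = 1)
    (p : Fin n → ℝ)
    (hp : ∀ i, p i = ∑ S ∈ Finset.univ.filter (fun S : Finset (Fin n) => i ∈ S), w S)
    (hproper : ∀ i, 0 < p i)
    (P : Matrix (Fin n) (Fin n) ℝ)
    (hP : ∀ i j, P i j =
      ∑ S ∈ Finset.univ.filter (fun S : Finset (Fin n) => i ∈ S ∧ j ∈ S), w S)
    (v : Fin n → ℝ)
    (hESO : (Matrix.diagonal (fun i => p i * v i) -
      (P - Matrix.of fun i j => p i * p j)).PosSemidef)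
    (b K : ℝ) (hb : b = ∑ i, p i)
    (hK : K = b / (n : ℝ) ^ 2 * ∑ i, v i * L i ^ 2 / p i)
    (x xt : EuclideanSpace ℝ (Fin d)) :
    ∑ S : Finset (Fin n), w S *
        ‖(∑ i ∈ S, ((n : ℝ) * p i)⁻¹ • (gradient (f i) x - gradient (f i) xt)) +
            gradient F xt‖ ^ 2
      ≤ 2 * ‖gradient F x‖ ^ 2 + (2 * K / b) * ‖x - xt‖ ^ 2 := by
  have hv := eso_nonneg w hw0 hw1 p hp hproper P hP v hESO
  have hmain := sampling_second_moment_le w hw1 p hp P hP v hESO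
    (fun i => ((n : ℝ) * p i)⁻¹ • (gradient (f i) x - gradient (f i) xt)) (gradient F xt)
  have hmean : (∑ i, p i • (((n : ℝ) * p i)⁻¹ • (gradient (f i) x - gradient (f i) xt)))
      + gradient F xt = gradient F x := by
    rw [hF, gradient_average f hdiff, gradient_average f hdiff, ← eq_sub_iff_add_eq, ← smul_sub,
      ← Finset.sum_sub_distrib, Finset.smul_sum]
    refine Finset.sum_congr rfl fun i _ => ?_
    rw [smul_smul, mul_inv, mul_left_comm, mul_inv_cancel₀ (hproper i).ne', mul_one]
  have hKb : K / b = ∑ i, v i * L i ^ 2 / p i / (n : ℝ) ^ 2 := by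
    rcases Nat.eq_zero_or_pos n with rfl | hn
    -- For `n = 0` both sides are `0`, since `b = 0` and division by zero is zero.
    · simp [hb]
    · have : NeZero n := ⟨hn.ne'⟩
      have hb0 : b ≠ 0 := by
        rw [hb]
        exact (Finset.sum_pos (fun i _ => hproper i) Finset.univ_nonempty).ne'
      rw [hK, ← Finset.sum_div]
      field_simp
  have hvar : ∑ i, p i * v i * ‖((n : ℝ) * p i)⁻¹ • (gradient (f i) x - gradient (f i) xt)‖ ^ 2
      ≤ K / b * ‖x - xt‖ ^ 2 := by
    rw [hKb, Finset.sum_mul]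
    refine Finset.sum_le_sum fun i _ => ?_
    have hpi := hproper i
    have hvi := hv i
    calc p i * v i * ‖((n : ℝ) * p i)⁻¹ • (gradient (f i) x - gradient (f i) xt)‖ ^ 2
        = p i * v i * (((n : ℝ) * p i)⁻¹) ^ 2
            * ‖gradient (f i) x - gradient (f i) xt‖ ^ 2 := by
          rw [norm_smul, mul_pow, Real.norm_eq_abs, sq_abs]
          ring
      _ ≤ p i * v i * (((n : ℝ) * p i)⁻¹) ^ 2 * (L i * ‖x - xt‖) ^ 2 := by
          gcongr
          exact hlip i x xt
      _ = v i * L i ^ 2 / p i / (n : ℝ) ^ 2 * ‖x - xt‖ ^ 2 := by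
          have hn0 : (n : ℝ) ≠ 0 := by
            have := i.pos
            positivity
          field_simp
  have hnonneg : 0 ≤ K / b * ‖x - xt‖ ^ 2 :=
    le_trans (Finset.sum_nonneg fun i _ =>
      mul_nonneg (mul_nonneg (hproper i).le (hv i)) (sq_nonneg _)) hvar
  rw [hmean] at hmain
  have hsplit : 2 * K / b * ‖x - xt‖ ^ 2 = 2 * (K / b * ‖x - xt‖ ^ 2) := by ring
  rw [hsplit]
  linarith [sq_nonneg ‖gradient F x‖]
end

section
/- Let each f_i : R^d → R be differentiable with L_i-Lipschitz gradient, f = (1/n) Σ_{i=1}^n f_i and L̄ = (1/n) Σ_{i=1}^n L_i. Let S be a proper sampling over [n] with probability vector p, v ∈ R^n satisfy the ESO condition for S, b = Σ_i p_i and K = (b/n²) Σ_{i=1}^n v_i L_i²/p_i. Fix x, x̃ ∈ R^d, step size η > 0, constants β > 0 and c⁺ ≥ 0, define the SVRG update w := Σ_{i∈S} (∇f_i(x) − ∇f_i(x̃))/(n p_i) + ∇f(x̃) and x⁺ := x − η w, and set c := c⁺(1 + ηβ + 2Kη²/b) + Kη²L̄/b and Γ := η − c⁺η/β − η²L̄ −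 2c⁺η². Then E[f(x⁺) + c⁺‖x⁺ − x̃‖²] ≤ f(x) + c‖x − x̃‖² − Γ·‖∇f(x)‖², where the expectation is over the random set S. -/
open scoped BigOperators

/-!
The stochastic gradient is `g_S = ∑_{i ∈ S} a_i + ∇F(x̃)` with `a_i = (∇f_i(x) - ∇f_i(x̃)) / (n p_i)`.
It is unbiased, `E g_S = ∇F(x)`, and the ESO condition, applied to each coordinate
(`sampling_variance_le_real`, `sampling_variance_le`), gives
`E‖g_S - ∇F(x)‖² ≤ ∑ p_i v_i ‖a_i‖² ≤ (K/b) ‖x - x̃‖²`; the last step uses `v_i ≥ 0`, which follows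
from the diagonal of the ESO matrix. Hence `E‖g_S‖² ≤ ‖∇F(x)‖² + (K/b) ‖x - x̃‖²`.

The descent lemma (`descent_lemma`) bounds `E F(x⁺)`, expanding the square and using
`-2⟪∇F(x), x - x̃⟫ ≤ ‖∇F(x)‖²/β + β‖x - x̃‖²` bounds `E‖x⁺ - x̃‖²`, and the two bounds add up to
the claim, with a factor two to spare in the terms coming from `E‖g_S‖²`.
-/

/-- A function with `M`-Lipschitz gradient lies below its quadratic upper model. -/
lemma descent_lemma {E : Type*} [NormedAddCommGroup E] [InnerProductSpace ℝ E] [CompleteSpace E]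
    (F : E → ℝ) (G : E → E) (M : ℝ) (hG : ∀ y, HasGradientAt F (G y) y)
    (hlip : ∀ y z, ‖G y - G z‖ ≤ M * ‖y - z‖) (x h : E) :
    F (x + h) ≤ F x + inner ℝ (G x) h + M / 2 * ‖h‖ ^ 2 := by
  let φ : ℝ → ℝ := fun t => F (x + t • h) - t * inner ℝ (G x) h - t ^ 2 * (M / 2 * ‖h‖ ^ 2)
  have hφ : ∀ t, HasDerivAt φ
      (inner ℝ (G (x + t • h)) h - inner ℝ (G x) h - 2 * t * (M / 2 * ‖h‖ ^ 2)) t := by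
    intro t
    have h1 : HasDerivAt (fun t : ℝ => x + t • h) h t := by
      simpa using ((hasDerivAt_id t).smul_const h).const_add x
    have h2 : HasDerivAt (fun t : ℝ => F (x + t • h)) (inner ℝ (G (x + t • h)) h) t := by
      simpa [Function.comp_def] using (hG (x + t • h)).hasFDerivAt.comp_hasDerivAt t h1
    have h3 : HasDerivAt (fun t : ℝ => t * inner ℝ (G x) h) (inner ℝ (G x) h) t := by
      simpa using (hasDerivAt_id t).mul_const (inner ℝ (G x) h)
    have h4 : HasDerivAt (fun t : ℝ => t ^ 2 * (M / 2 * ‖h‖ ^ 2))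
        (2 * t * (M / 2 * ‖h‖ ^ 2)) t := by
      simpa using (hasDerivAt_pow 2 t).mul_const (M / 2 * ‖h‖ ^ 2)
    exact (h2.sub h3).sub h4
  have hanti : AntitoneOn φ (Set.Icc 0 1) := by
    apply antitoneOn_of_deriv_nonpos (convex_Icc 0 1)
    · exact fun t _ => (hφ t).continuousAt.continuousWithinAt
    · exact fun t _ => (hφ t).differentiableAt.differentiableWithinAt
    · intro t ht
      rw [interior_Icc] at ht
      rw [(hφ t).deriv, ← inner_sub_left]
      have h1 := real_inner_le_norm (G (x + t • h) - G x) h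
      have h2 := hlip (x + t • h) x
      rw [add_sub_cancel_left, norm_smul, Real.norm_of_nonneg ht.1.le] at h2
      have h3 := mul_le_mul_of_nonneg_right h2 (norm_nonneg h)
      linarith
  have := hanti (by simp) (by simp) (zero_le_one' ℝ)
  simp [φ] at this
  linarith

/-- The ESO condition as a variance bound for a scalar random sum `∑_{i ∈ S} y_i`. -/
lemma sampling_variance_le_real {n : ℕ} (w : Finset (Fin n) → ℝ) (hw1 : ∑ S, w S = 1)
    (p : Fin n → ℝ)
    (hp : ∀ i, p i = ∑ S ∈ Finset.univ.filter (fun S : Finset (Fin n) => i ∈ S), w S)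
    (P : Matrix (Fin n) (Fin n) ℝ)
    (hP : ∀ i j, P i j =
      ∑ S ∈ Finset.univ.filter (fun S : Finset (Fin n) => i ∈ S ∧ j ∈ S), w S)
    (v : Fin n → ℝ)
    (hESO : (Matrix.diagonal (fun i => p i * v i) -
      (P - Matrix.of fun i j => p i * p j)).PosSemidef) (y : Fin n → ℝ) :
    ∑ S, w S * (∑ i ∈ S, y i - ∑ i, p i * y i) ^ 2 ≤ ∑ i, p i * v i * y i ^ 2 := by
  have hmean : ∑ S, w S * ∑ i ∈ S, y i = ∑ i, p i * y i := by
    simp_rw [hp, Finset.sum_mul, Finset.sum_filter, Finset.mul_sum]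
    rw [Finset.sum_comm]
    refine Finset.sum_congr rfl fun S _ => ?_
    rw [← Finset.sum_filter]
    simp
  have hsecond : ∑ S, w S * (∑ i ∈ S, y i) ^ 2 = ∑ i, ∑ j, P i j * (y i * y j) := by
    have h1 : ∀ S : Finset (Fin n), w S * (∑ i ∈ S, y i) ^ 2
        = ∑ i, ∑ j, if i ∈ S ∧ j ∈ S then w S * (y i * y j) else 0 := by
      intro S
      have : ∑ i ∈ S, y i = ∑ i, if i ∈ S then y i else 0 := by simp
      rw [this, sq, Finset.sum_mul_sum, Finset.mul_sum]
      refine Finset.sum_congr rfl fun i _ => ?_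
      rw [Finset.mul_sum]
      refine Finset.sum_congr rfl fun j _ => ?_
      by_cases hi : i ∈ S <;> by_cases hj : j ∈ S <;> simp [hi, hj]
    simp_rw [h1]
    rw [Finset.sum_comm]
    refine Finset.sum_congr rfl fun i _ => ?_
    rw [Finset.sum_comm]
    refine Finset.sum_congr rfl fun j _ => ?_
    rw [hP, Finset.sum_mul, Finset.sum_filter]
  have hpsd := hESO.dotProduct_mulVec_nonneg y
  have hquad : star y ⬝ᵥ (Matrix.diagonal (fun i => p i * v i) -
      (P - Matrix.of fun i j => p i * p j)).mulVec y
      = ∑ i, p i * v i * y i ^ 2 - (∑ i, ∑ j, P i j * (y i * y j) - (∑ i, p i * y i) ^ 2) := by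
    rw [Matrix.sub_mulVec, Matrix.sub_mulVec, dotProduct_sub, dotProduct_sub]
    congr 1
    · simp only [dotProduct, Matrix.mulVec_diagonal, Pi.star_apply, star_trivial]
      exact Finset.sum_congr rfl fun i _ => by ring
    · congr 1
      · simp only [dotProduct, Matrix.mulVec, Pi.star_apply, star_trivial, Finset.mul_sum]
        exact Finset.sum_congr rfl fun i _ => Finset.sum_congr rfl fun j _ => by ring
      · rw [sq, Finset.sum_mul_sum]
        simp only [dotProduct, Matrix.mulVec, Pi.star_apply, star_trivial, Finset.mul_sum,
          Matrix.of_apply]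
        exact Finset.sum_congr rfl fun i _ => Finset.sum_congr rfl fun j _ => by ring
  rw [hquad] at hpsd
  generalize ∑ i, p i * y i = m at hmean hpsd ⊢
  have hexp : ∑ S, w S * (∑ i ∈ S, y i - m) ^ 2
      = ∑ S, w S * (∑ i ∈ S, y i) ^ 2 - 2 * m * ∑ S, w S * ∑ i ∈ S, y i + m ^ 2 * ∑ S, w S := by
    rw [Finset.mul_sum, Finset.mul_sum, ← Finset.sum_sub_distrib, ← Finset.sum_add_distrib]
    exact Finset.sum_congr rfl fun S _ => by ring
  rw [hexp, hsecond, hmean, hw1]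
  linarith

/-- The ESO condition as a variance bound for a vector-valued random sum `∑_{i ∈ S} a_i`. -/
lemma sampling_variance_le {n d : ℕ} (w : Finset (Fin n) → ℝ) (hw1 : ∑ S, w S = 1)
    (p : Fin n → ℝ)
    (hp : ∀ i, p i = ∑ S ∈ Finset.univ.filter (fun S : Finset (Fin n) => i ∈ S), w S)
    (P : Matrix (Fin n) (Fin n) ℝ)
    (hP : ∀ i j, P i j =
      ∑ S ∈ Finset.univ.filter (fun S : Finset (Fin n) => i ∈ S ∧ j ∈ S), w S)
    (v : Fin n → ℝ)
    (hESO : (Matrix.diagonal (fun i => p i * v i) -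
      (P - Matrix.of fun i j => p i * p j)).PosSemidef)
    (a : Fin n → EuclideanSpace ℝ (Fin d)) :
    ∑ S, w S * ‖∑ i ∈ S, a i - ∑ i, p i • a i‖ ^ 2 ≤ ∑ i, p i * v i * ‖a i‖ ^ 2 := by
  simp_rw [EuclideanSpace.real_norm_sq_eq, Finset.mul_sum]
  rw [Finset.sum_comm, Finset.sum_comm (s := (Finset.univ : Finset (Fin n)))]
  refine Finset.sum_le_sum fun k _ => ?_
  simpa using sampling_variance_le_real w hw1 p hp P hP v hESO (fun i => a i k)

/-- One-step Lyapunov inequality for minibatch SVRG with arbitrary sampling: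
`E[f(x⁺) + c⁺‖x⁺ - x̃‖²] ≤ f(x) + c‖x - x̃‖² - Γ‖∇f(x)‖²`. -/
theorem svrg_one_step_lyapunov_bound {n d : ℕ}
    (f : Fin n → EuclideanSpace ℝ (Fin d) → ℝ)
    (L : Fin n → ℝ) (hL : ∀ i, 0 ≤ L i)
    (hdiff : ∀ i, Differentiable ℝ (f i))
    (hlip : ∀ i x y, ‖gradient (f i) x - gradient (f i) y‖ ≤ L i * ‖x - y‖)
    (F : EuclideanSpace ℝ (Fin d) → ℝ)
    (hF : F = fun y => (n : ℝ)⁻¹ * ∑ i, f i y)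
    (Lbar : ℝ) (hLbar : Lbar = (n : ℝ)⁻¹ * ∑ i, L i)
    (w : Finset (Fin n) → ℝ) (hw0 : ∀ S, 0 ≤ w S) (hw1 : ∑ S, w S = 1)
    (p : Fin n → ℝ)
    (hp : ∀ i, p i = ∑ S ∈ Finset.univ.filter (fun S : Finset (Fin n) => i ∈ S), w S)
    (hproper : ∀ i, 0 < p i)
    (P : Matrix (Fin n) (Fin n) ℝ)
    (hP : ∀ i j, P i j =
      ∑ S ∈ Finset.univ.filter (fun S : Finset (Fin n) => i ∈ S ∧ j ∈ S), w S)
    (v : Fin n → ℝ)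
    (hESO : (Matrix.diagonal (fun i => p i * v i) -
      (P - Matrix.of fun i j => p i * p j)).PosSemidef)
    (b K : ℝ) (hb : b = ∑ i, p i)
    (hK : K = b / (n : ℝ) ^ 2 * ∑ i, v i * L i ^ 2 / p i)
    (x xt : EuclideanSpace ℝ (Fin d))
    (η β cplus : ℝ) (hη : 0 < η) (hβ : 0 < β) (hcplus : 0 ≤ cplus)
    (c Γ : ℝ)
    (hc : c = cplus * (1 + η * β + 2 * K * η ^ 2 / b) + K * η ^ 2 * Lbar / b)
    (hΓ : Γ = η - cplus * η / β - η ^ 2 * Lbar - 2 * cplus * η ^ 2) :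
    ∑ S : Finset (Fin n), w S *
        (F (x - η • ((∑ i ∈ S, ((n : ℝ) * p i)⁻¹ •
              (gradient (f i) x - gradient (f i) xt)) + gradient F xt)) +
          cplus * ‖(x - η • ((∑ i ∈ S, ((n : ℝ) * p i)⁻¹ •
              (gradient (f i) x - gradient (f i) xt)) + gradient F xt)) - xt‖ ^ 2)
      ≤ F x + c * ‖x - xt‖ ^ 2 - Γ * ‖gradient F x‖ ^ 2 := by
  have hn0 : (0 : ℝ) ≤ (n : ℝ)⁻¹ := by positivity
  have hgrad : ∀ y, HasGradientAt F ((n : ℝ)⁻¹ • ∑ i, gradient (f i) y) y := by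
    intro y
    rw [hasGradientAt_iff_hasFDerivAt, hF, map_smul, map_sum]
    exact (HasFDerivAt.fun_sum fun i _ =>
      (hdiff i y).hasGradientAt.hasFDerivAt).const_mul ((n : ℝ)⁻¹)
  have hFlip : ∀ y z, ‖(n : ℝ)⁻¹ • ∑ i, gradient (f i) y - (n : ℝ)⁻¹ • ∑ i, gradient (f i) z‖
      ≤ Lbar * ‖y - z‖ := by
    intro y z
    rw [← smul_sub, ← Finset.sum_sub_distrib, norm_smul, Real.norm_of_nonneg hn0, hLbar,
      mul_assoc, Finset.sum_mul]
    exact mul_le_mul_of_nonneg_left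
      ((norm_sum_le _ _).trans (Finset.sum_le_sum fun i _ => hlip i y z)) hn0
  have hLbar0 : 0 ≤ Lbar := hLbar ▸ mul_nonneg hn0 (Finset.sum_nonneg fun i _ => hL i)
  have hv : ∀ i, 0 ≤ v i := by
    intro i
    have h1 := hESO.diag_nonneg (i := i)
    have hPii : P i i = p i := by rw [hP, hp]; simp
    have hp1 : p i ≤ 1 := by
      rw [hp, ← hw1]
      exact Finset.sum_le_sum_of_subset_of_nonneg (Finset.filter_subset _ _) fun S _ _ => hw0 S
    simp only [Matrix.sub_apply, Matrix.diagonal_apply_eq, Matrix.of_apply, hPii] at h1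
    have h2 : 0 ≤ p i * (v i - (1 - p i)) := by linarith
    have := nonneg_of_mul_nonneg_right h2 (hproper i)
    linarith
  -- `b = 0` only for `n = 0`, and then both sides vanish.
  have hKb : K / b = ((n : ℝ) ^ 2)⁻¹ * ∑ i, v i * L i ^ 2 / p i := by
    rcases Nat.eq_zero_or_pos n with rfl | hn
    · simp [hK]
    · have : Nonempty (Fin n) := ⟨⟨0, hn⟩⟩
      have hb0 : 0 < b := hb ▸ Finset.sum_pos (fun i _ => hproper i) Finset.univ_nonempty
      rw [hK]
      field_simp
  set κ := K / b with hκ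
  have hκ0 : 0 ≤ κ := by
    rw [hKb]
    exact mul_nonneg (by positivity) (Finset.sum_nonneg fun i _ =>
      div_nonneg (mul_nonneg (hv i) (sq_nonneg _)) (hproper i).le)
  have hc' : c = cplus * (1 + η * β + 2 * κ * η ^ 2) + κ * η ^ 2 * Lbar := by
    rw [hc, hκ]; ring
  set a : Fin n → EuclideanSpace ℝ (Fin d) := fun i =>
    ((n : ℝ) * p i)⁻¹ • (gradient (f i) x - gradient (f i) xt) with ha
  set g := gradient F x with hg
  have hmean : ∑ i, p i • a i + gradient F xt = g := by
    rw [hg, (hgrad x).gradient, (hgrad xt).gradient]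
    have : ∀ i, p i • a i = (n : ℝ)⁻¹ • (gradient (f i) x - gradient (f i) xt) := by
      intro i
      have := (hproper i).ne'
      rw [ha, smul_smul]
      congr 1
      rw [mul_inv]
      field_simp
    simp_rw [this]
    rw [← Finset.smul_sum, ← smul_add, Finset.sum_sub_distrib, sub_add_cancel]
  set e : Finset (Fin n) → EuclideanSpace ℝ (Fin d) := fun S =>
    ∑ i ∈ S, a i - ∑ i, p i • a i with he
  have hstoch : ∀ S : Finset (Fin n), ∑ i ∈ S, a i + gradient F xt = g + e S := by
    intro S
    rw [← hmean]
    simp only [he]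
    generalize ∑ i, p i • a i = m
    abel
  have hvar : ∑ S, w S * ‖e S‖ ^ 2 ≤ κ * ‖x - xt‖ ^ 2 := by
    refine (sampling_variance_le w hw1 p hp P hP v hESO a).trans ?_
    rw [hKb, Finset.mul_sum, Finset.sum_mul]
    refine Finset.sum_le_sum fun i _ => ?_
    have hpi := hproper i
    have h1 : ‖a i‖ ^ 2 ≤ (((n : ℝ) * p i)⁻¹) ^ 2 * (L i * ‖x - xt‖) ^ 2 := by
      rw [ha, norm_smul, mul_pow, Real.norm_of_nonneg (by positivity)]
      gcongr
      exact hlip i x xt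
    calc p i * v i * ‖a i‖ ^ 2
        ≤ p i * v i * ((((n : ℝ) * p i)⁻¹) ^ 2 * (L i * ‖x - xt‖) ^ 2) :=
          mul_le_mul_of_nonneg_left h1 (mul_nonneg hpi.le (hv i))
      _ = _ := by
          rw [mul_inv]
          field_simp
  have hezero : ∀ z : EuclideanSpace ℝ (Fin d), ∑ S, w S * inner ℝ (e S) z = 0 := by
    intro z
    have h1 : ∑ S, w S • e S = 0 := by
      simp only [he, smul_sub, Finset.sum_sub_distrib]
      rw [← Finset.sum_smul, hw1, one_smul, sub_eq_zero]
      simp_rw [hp, Finset.sum_smul, Finset.sum_filter, Finset.smul_sum]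
      rw [Finset.sum_comm]
      refine Finset.sum_congr rfl fun S _ => ?_
      rw [← Finset.sum_filter]
      simp
    have h2 : ∑ S, w S * inner ℝ (e S) z = inner ℝ (∑ S, w S • e S) z := by
      rw [sum_inner]
      simp [real_inner_smul_left]
    rw [h2, h1, inner_zero_left]
  -- For each outcome `S` the Lyapunov value is at most a constant, plus a term linear in the
  -- centred error `e S`, plus a multiple of `‖e S‖²`.
  set A := F x - η * ‖g‖ ^ 2 + Lbar / 2 * η ^ 2 * ‖g‖ ^ 2 +
    cplus * (‖x - xt‖ ^ 2 - 2 * η * inner ℝ g (x - xt) + η ^ 2 * ‖g‖ ^ 2) with hA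
  set Q := Lbar / 2 * η ^ 2 + cplus * η ^ 2 with hQ
  set z : EuclideanSpace ℝ (Fin d) :=
    (-η + Lbar * η ^ 2 + 2 * cplus * η ^ 2) • g - (2 * cplus * η) • (x - xt) with hz
  have hpoint : ∀ S, F (x - η • (g + e S)) + cplus * ‖x - η • (g + e S) - xt‖ ^ 2
      ≤ A + inner ℝ (e S) z + Q * ‖e S‖ ^ 2 := by
    intro S
    have h1 := descent_lemma F _ Lbar hgrad hFlip x (-(η • (g + e S)))
    rw [← (hgrad x).gradient, ← hg, ← sub_eq_add_neg, norm_neg, norm_smul, mul_pow,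
      Real.norm_of_nonneg hη.le, norm_add_sq_real, inner_neg_right, real_inner_smul_right,
      inner_add_right, real_inner_self_eq_norm_sq] at h1
    have h2 : ‖x - η • (g + e S) - xt‖ ^ 2 = ‖x - xt‖ ^ 2
        - 2 * η * (inner ℝ g (x - xt) + inner ℝ (e S) (x - xt))
        + η ^ 2 * (‖g‖ ^ 2 + 2 * inner ℝ g (e S) + ‖e S‖ ^ 2) := by
      rw [show x - η • (g + e S) - xt = (x - xt) - η • (g + e S) by abel, norm_sub_sq_real,
        real_inner_smul_right, norm_smul, mul_pow, Real.norm_of_nonneg hη.le, norm_add_sq_real,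
        real_inner_comm, inner_add_left]
      ring
    have h3 : inner ℝ (e S) z = (-η + Lbar * η ^ 2 + 2 * cplus * η ^ 2) * inner ℝ g (e S)
        - 2 * cplus * η * inner ℝ (e S) (x - xt) := by
      rw [hz, inner_sub_right, real_inner_smul_right, real_inner_smul_right,
        real_inner_comm g (e S)]
    rw [h2, h3, hA, hQ]
    linarith
  have hexpect : ∑ S, w S * (F (x - η • (g + e S)) + cplus * ‖x - η • (g + e S) - xt‖ ^ 2)
      ≤ A + Q * (κ * ‖x - xt‖ ^ 2) := by
    calc _ ≤ ∑ S, w S * (A + inner ℝ (e S) z + Q * ‖e S‖ ^ 2) :=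
          Finset.sum_le_sum fun S _ => mul_le_mul_of_nonneg_left (hpoint S) (hw0 S)
      _ = A * ∑ S, w S + ∑ S, w S * inner ℝ (e S) z + Q * ∑ S, w S * ‖e S‖ ^ 2 := by
          rw [Finset.mul_sum, Finset.mul_sum, ← Finset.sum_add_distrib,
            ← Finset.sum_add_distrib]
          exact Finset.sum_congr rfl fun S _ => by ring
      _ ≤ _ := by
          rw [hw1, hezero, mul_one, add_zero]
          have : 0 ≤ Q := by positivity
          gcongr
  simp only [hstoch]
  refine hexpect.trans ?_
  have hyoung : -(2 * inner ℝ g (x - xt)) ≤ ‖g‖ ^ 2 / β + β * ‖x - xt‖ ^ 2 := by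
    have h1 := neg_le_of_abs_le (abs_real_inner_le_norm g (x - xt))
    have h2 : ‖g‖ ^ 2 / β + β * ‖x - xt‖ ^ 2 - 2 * (‖g‖ * ‖x - xt‖)
        = (‖g‖ - β * ‖x - xt‖) ^ 2 / β := by
      field_simp
      ring
    have h3 : 0 ≤ (‖g‖ - β * ‖x - xt‖) ^ 2 / β := by positivity
    linarith
  have hyoung' := mul_le_mul_of_nonneg_left hyoung (mul_nonneg hcplus hη.le)
  have hslack : 0 ≤ Q * (κ * ‖x - xt‖ ^ 2 + ‖g‖ ^ 2) := by positivity
  have hid : F x + c * ‖x - xt‖ ^ 2 - Γ * ‖g‖ ^ 2 - (A + Q * (κ * ‖x - xt‖ ^ 2))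
      = cplus * η * (‖g‖ ^ 2 / β + β * ‖x - xt‖ ^ 2)
        - cplus * η * (-(2 * inner ℝ g (x - xt)))
        + Q * (κ * ‖x - xt‖ ^ 2 + ‖g‖ ^ 2) := by
    rw [hc', hΓ, hA, hQ]
    ring
  linarith
end

section
/- Let each f_i : R^d → R be differentiable with L_i-Lipschitz gradient. Let S be a proper sampling over [n] with probability vector p, let v ∈ R^n satisfy the ESO condition for S, and set b = Σ_i p_i and K = (b/n²) Σ_{i=1}^n v_i L_i²/p_i. Then for any point x ∈ R^d and any points α_1,…,α_n ∈ R^d, the SAGA stochastic gradient estimator w := Σ_{i∈S} (∇f_i(x) − ∇f_i(α_i))/(n p_i) + (1/n) Σ_{j=1}^n ∇f_j(α_j) satisfies E‖w‖² ≤ 2‖∇f(x)‖² + (2K/b)·max_{i∈[n]} ‖x − α_i‖², where f = (1/n) Σ_i f_i and the expectation is over the random set S. -/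
open scoped BigOperators

/-!
The estimator `g` is unbiased: its mean is `∇F(x)`. Hence `E‖g‖² = ‖∇F(x)‖² + Var(g)`, and the
ESO condition, applied in each coordinate to the vectors `(n pᵢ)⁻¹ (∇fᵢ(x) - ∇fᵢ(αᵢ))`, bounds
the variance by `∑ᵢ pᵢ vᵢ ‖(n pᵢ)⁻¹ (∇fᵢ(x) - ∇fᵢ(αᵢ))‖²` (`saga_second_moment_le`). The Lipschitz
bounds turn this into `(K / b) · max ‖x - αᵢ‖²`, where `vᵢ ≥ 0` because the diagonal of the ESO
inequality gives `vᵢ ≥ 1 - pᵢ`. This proves the bound with both factors `2` replaced by `1`.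
-/

lemma saga_mean {n : ℕ} (w : Finset (Fin n) → ℝ) (p : Fin n → ℝ)
    (hp : ∀ i, p i = ∑ S ∈ Finset.univ.filter (fun S : Finset (Fin n) => i ∈ S), w S)
    (t : Fin n → ℝ) :
    ∑ S : Finset (Fin n), w S * ∑ i ∈ S, t i = ∑ i, p i * t i := by
  have h : ∀ S : Finset (Fin n), w S * ∑ i ∈ S, t i = ∑ i, if i ∈ S then w S * t i else 0 := by
    intro S
    rw [Finset.mul_sum, ← Finset.sum_filter]
    simp
  simp_rw [h]
  rw [Finset.sum_comm]
  refine Finset.sum_congr rfl fun i _ => ?_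
  rw [hp i, Finset.sum_mul, Finset.sum_filter]

lemma saga_square {n : ℕ} (w : Finset (Fin n) → ℝ) (P : Matrix (Fin n) (Fin n) ℝ)
    (hP : ∀ i j, P i j =
      ∑ S ∈ Finset.univ.filter (fun S : Finset (Fin n) => i ∈ S ∧ j ∈ S), w S)
    (t : Fin n → ℝ) :
    ∑ S : Finset (Fin n), w S * (∑ i ∈ S, t i) ^ 2 = ∑ i, ∑ j, P i j * (t i * t j) := by
  have h : ∀ S : Finset (Fin n), w S * (∑ i ∈ S, t i) ^ 2 =
      ∑ i, ∑ j, if i ∈ S ∧ j ∈ S then w S * (t i * t j) else 0 := by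
    intro S
    have h1 : ∑ i ∈ S, t i = ∑ i, if i ∈ S then t i else 0 := by
      rw [← Finset.sum_filter]
      simp
    rw [h1, sq, Finset.sum_mul_sum, Finset.mul_sum]
    refine Finset.sum_congr rfl fun i _ => ?_
    rw [Finset.mul_sum]
    refine Finset.sum_congr rfl fun j _ => ?_
    by_cases hi : i ∈ S <;> by_cases hj : j ∈ S <;> simp [hi, hj]
  simp_rw [h]
  rw [Finset.sum_comm]
  refine Finset.sum_congr rfl fun i _ => ?_
  rw [Finset.sum_comm]
  refine Finset.sum_congr rfl fun j _ => ?_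
  rw [hP i j, Finset.sum_mul, Finset.sum_filter]

/-- Scalar form of the bias-variance decomposition, with the variance bounded through ESO. -/
lemma saga_scalar_second_moment_le {n : ℕ} (w : Finset (Fin n) → ℝ) (hw1 : ∑ S, w S = 1)
    (p : Fin n → ℝ)
    (hp : ∀ i, p i = ∑ S ∈ Finset.univ.filter (fun S : Finset (Fin n) => i ∈ S), w S)
    (P : Matrix (Fin n) (Fin n) ℝ)
    (hP : ∀ i j, P i j =
      ∑ S ∈ Finset.univ.filter (fun S : Finset (Fin n) => i ∈ S ∧ j ∈ S), w S)
    (v : Fin n → ℝ)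
    (hESO : (Matrix.diagonal (fun i => p i * v i) -
      (P - Matrix.of fun i j => p i * p j)).PosSemidef)
    (t : Fin n → ℝ) (c : ℝ) :
    ∑ S : Finset (Fin n), w S * ((∑ i ∈ S, t i) + c) ^ 2 ≤
      (∑ i, p i * t i + c) ^ 2 + ∑ i, p i * v i * t i ^ 2 := by
  have hquad := hESO.dotProduct_mulVec_nonneg t
  have hexp : star t ⬝ᵥ ((Matrix.diagonal (fun i => p i * v i) -
      (P - Matrix.of fun i j => p i * p j)).mulVec t) =
      ∑ i, p i * v i * t i ^ 2 - ∑ i, ∑ j, P i j * (t i * t j) + (∑ i, p i * t i) ^ 2 := by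
    rw [Matrix.sub_mulVec, Matrix.sub_mulVec, sq (∑ i, p i * t i), Finset.sum_mul_sum,
      ← Finset.sum_sub_distrib, ← Finset.sum_add_distrib]
    simp only [dotProduct, Pi.sub_apply, Matrix.mulVec_diagonal, star_trivial]
    refine Finset.sum_congr rfl fun i _ => ?_
    simp only [Matrix.mulVec, dotProduct, Matrix.of_apply, mul_sub, Finset.mul_sum]
    have h1 : ∑ j, t i * (P i j * t j) = ∑ j, P i j * (t i * t j) :=
      Finset.sum_congr rfl fun j _ => by ring
    have h2 : ∑ j, t i * (p i * p j * t j) = ∑ j, p i * t i * (p j * t j) :=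
      Finset.sum_congr rfl fun j _ => by ring
    rw [h1, h2]
    ring
  rw [hexp] at hquad
  have hsplit : ∑ S : Finset (Fin n), w S * ((∑ i ∈ S, t i) + c) ^ 2 =
      ∑ S : Finset (Fin n), w S * (∑ i ∈ S, t i) ^ 2 +
        2 * c * ∑ S : Finset (Fin n), w S * ∑ i ∈ S, t i + c ^ 2 * ∑ S, w S := by
    rw [Finset.mul_sum, Finset.mul_sum, ← Finset.sum_add_distrib, ← Finset.sum_add_distrib]
    exact Finset.sum_congr rfl fun S _ => by ring
  rw [hsplit, hw1, saga_mean w p hp, saga_square w P hP]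
  linarith

/-- Vector form of `saga_scalar_second_moment_le`, obtained by summing over coordinates. -/
lemma saga_second_moment_le {n d : ℕ} (w : Finset (Fin n) → ℝ) (hw1 : ∑ S, w S = 1)
    (p : Fin n → ℝ)
    (hp : ∀ i, p i = ∑ S ∈ Finset.univ.filter (fun S : Finset (Fin n) => i ∈ S), w S)
    (P : Matrix (Fin n) (Fin n) ℝ)
    (hP : ∀ i j, P i j =
      ∑ S ∈ Finset.univ.filter (fun S : Finset (Fin n) => i ∈ S ∧ j ∈ S), w S)
    (v : Fin n → ℝ)
    (hESO : (Matrix.diagonal (fun i => p i * v i) -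
      (P - Matrix.of fun i j => p i * p j)).PosSemidef)
    (u : Fin n → EuclideanSpace ℝ (Fin d)) (c : EuclideanSpace ℝ (Fin d)) :
    ∑ S : Finset (Fin n), w S * ‖(∑ i ∈ S, u i) + c‖ ^ 2 ≤
      ‖∑ i, p i • u i + c‖ ^ 2 + ∑ i, p i * v i * ‖u i‖ ^ 2 := by
  simp only [EuclideanSpace.real_norm_sq_eq, Finset.mul_sum]
  rw [Finset.sum_comm, Finset.sum_comm (s := (Finset.univ : Finset (Fin n))),
    ← Finset.sum_add_distrib]
  refine Finset.sum_le_sum fun k _ => ?_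
  simpa using saga_scalar_second_moment_le w hw1 p hp P hP v hESO (fun i => u i k) (c k)

/-- Variance bound for the minibatch SAGA gradient estimator under arbitrary
sampling: `E‖w‖² ≤ 2‖∇f(x)‖² + (2K/b)·max_i ‖x - α i‖²`. -/
theorem saga_estimator_second_moment_bound {n d : ℕ} (hn : 0 < n)
    (f : Fin n → EuclideanSpace ℝ (Fin d) → ℝ)
    (L : Fin n → ℝ) (hL : ∀ i, 0 ≤ L i)
    (hdiff : ∀ i, Differentiable ℝ (f i))
    (hlip : ∀ i x y, ‖gradient (f i) x - gradient (f i) y‖ ≤ L i * ‖x - y‖)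
    (F : EuclideanSpace ℝ (Fin d) → ℝ)
    (hF : F = fun y => (n : ℝ)⁻¹ * ∑ i, f i y)
    (w : Finset (Fin n) → ℝ) (hw0 : ∀ S, 0 ≤ w S) (hw1 : ∑ S, w S = 1)
    (p : Fin n → ℝ)
    (hp : ∀ i, p i = ∑ S ∈ Finset.univ.filter (fun S : Finset (Fin n) => i ∈ S), w S)
    (hproper : ∀ i, 0 < p i)
    (P : Matrix (Fin n) (Fin n) ℝ)
    (hP : ∀ i j, P i j =
      ∑ S ∈ Finset.univ.filter (fun S : Finset (Fin n) => i ∈ S ∧ j ∈ S), w S)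
    (v : Fin n → ℝ)
    (hESO : (Matrix.diagonal (fun i => p i * v i) -
      (P - Matrix.of fun i j => p i * p j)).PosSemidef)
    (b K : ℝ) (hb : b = ∑ i, p i)
    (hK : K = b / (n : ℝ) ^ 2 * ∑ i, v i * L i ^ 2 / p i)
    (x : EuclideanSpace ℝ (Fin d)) (α : Fin n → EuclideanSpace ℝ (Fin d)) :
    ∑ S : Finset (Fin n), w S *
        ‖(∑ i ∈ S, ((n : ℝ) * p i)⁻¹ • (gradient (f i) x - gradient (f i) (α i))) +
            (n : ℝ)⁻¹ • ∑ j, gradient (f j) (α j)‖ ^ 2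
      ≤ 2 * ‖gradient F x‖ ^ 2 +
        (2 * K / b) * Finset.univ.sup' ⟨⟨0, hn⟩, Finset.mem_univ _⟩
          (fun i => ‖x - α i‖ ^ 2) := by
  have hn' : (n : ℝ) ≠ 0 := by exact_mod_cast hn.ne'
  have hgrad : gradient F x = (n : ℝ)⁻¹ • ∑ i, gradient (f i) x := by
    have h : HasGradientAt F ((n : ℝ)⁻¹ • ∑ i, gradient (f i) x) x := by
      rw [hasGradientAt_iff_hasFDerivAt, hF, map_smul, map_sum]
      refine HasFDerivAt.const_mul ?_ _
      exact HasFDerivAt.fun_sum fun i _ => (hdiff i x).hasGradientAt.hasFDerivAt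
    exact h.gradient
  -- `p i ≤ 1` and the `i`-th diagonal entry of the ESO inequality reads `p i * (v i - 1 + p i) ≥ 0`.
  have hv : ∀ i, 0 ≤ v i := by
    intro i
    have hp1 : p i ≤ 1 := by
      rw [hp i, ← hw1]
      exact Finset.sum_le_sum_of_subset_of_nonneg (Finset.filter_subset _ _) fun S _ _ => hw0 S
    have hPi : P i i = p i := by
      rw [hP, hp]
      simp
    have hd := hESO.diag_nonneg (i := i)
    simp only [Matrix.sub_apply, Matrix.diagonal_apply_eq, Matrix.of_apply, hPi] at hd
    have hd' : 0 ≤ p i * (v i - (1 - p i)) := by linarith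
    have := nonneg_of_mul_nonneg_right hd' (hproper i)
    linarith
  have hbpos : 0 < b := by
    rw [hb]
    exact Finset.sum_pos (fun i _ => hproper i) ⟨⟨0, hn⟩, Finset.mem_univ _⟩
  set M := Finset.univ.sup' ⟨⟨0, hn⟩, Finset.mem_univ _⟩ (fun i => ‖x - α i‖ ^ 2) with hM
  have hMi : ∀ i, ‖x - α i‖ ^ 2 ≤ M := fun i =>
    Finset.le_sup' (fun i => ‖x - α i‖ ^ 2) (Finset.mem_univ i)
  have hM0 : 0 ≤ M := (sq_nonneg _).trans (hMi ⟨0, hn⟩)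
  have hmain := saga_second_moment_le w hw1 p hp P hP v hESO
    (fun i => ((n : ℝ) * p i)⁻¹ • (gradient (f i) x - gradient (f i) (α i)))
    ((n : ℝ)⁻¹ • ∑ j, gradient (f j) (α j))
  have hmean : ∑ i, p i • ((n : ℝ) * p i)⁻¹ • (gradient (f i) x - gradient (f i) (α i)) +
      (n : ℝ)⁻¹ • ∑ j, gradient (f j) (α j) = gradient F x := by
    rw [hgrad, Finset.smul_sum, Finset.smul_sum, ← Finset.sum_add_distrib]
    refine Finset.sum_congr rfl fun i _ => ?_
    have hpi := (hproper i).ne'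
    have : p i * ((n : ℝ) * p i)⁻¹ = (n : ℝ)⁻¹ := by field_simp
    rw [smul_smul, this, smul_sub, sub_add_cancel]
  rw [hmean] at hmain
  have hKb : K / b = ∑ i, ((n : ℝ) ^ 2)⁻¹ * (v i * L i ^ 2 / p i) := by
    rw [hK, ← Finset.mul_sum]
    field_simp
  have hvar : ∑ i, p i * v i *
      ‖((n : ℝ) * p i)⁻¹ • (gradient (f i) x - gradient (f i) (α i))‖ ^ 2 ≤ K / b * M := by
    rw [hKb, Finset.sum_mul]
    refine Finset.sum_le_sum fun i _ => ?_
    have hpi := hproper i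
    have hg : ‖gradient (f i) x - gradient (f i) (α i)‖ ^ 2 ≤ L i ^ 2 * M :=
      calc _ ≤ (L i * ‖x - α i‖) ^ 2 := by gcongr; exact hlip i x (α i)
        _ = L i ^ 2 * ‖x - α i‖ ^ 2 := by ring
        _ ≤ _ := by gcongr; exact hMi i
    have hvi := hv i
    calc _ = ((n : ℝ) ^ 2)⁻¹ * (v i / p i) *
          ‖gradient (f i) x - gradient (f i) (α i)‖ ^ 2 := by
          rw [norm_smul, mul_pow, Real.norm_eq_abs, sq_abs]
          field_simp
      _ ≤ ((n : ℝ) ^ 2)⁻¹ * (v i / p i) * (L i ^ 2 * M) := by gcongr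
      _ = _ := by ring
  have hK0 : 0 ≤ K / b := by
    rw [hKb]
    refine Finset.sum_nonneg fun i _ => ?_
    have := hproper i
    have := hv i
    positivity
  have h1 : 0 ≤ K / b * M := mul_nonneg hK0 hM0
  have h2 : 2 * K / b * M = 2 * (K / b * M) := by ring
  rw [h2]
  linarith [sq_nonneg ‖gradient F x‖]
end

section
/- Let each f_i : R^d → R be convex and differentiable with L_i-Lipschitz gradient, let L̄ = (1/n) Σ_{i=1}^n L_i and set the importance sampling probabilities p_i = L_i/(Σ_{j=1}^n L_j). Fix x, u ∈ R^d and a step size 0 < η < 2/L̄, set x' = x − η u, draw a single random index i ∈ [n] with Prob(i = j) = p_j, and define the SARAH update u' := u + (1/(n p_i))(∇f_i(x') − ∇f_i(x)). Then E‖u' − u‖² ≤ (η L̄/(2 − η L̄))·( ‖u‖² − E‖u'‖² ), where the expectation is over the random index i. -/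
/-!
With `g i = ∇f_i(x') - ∇f_i(x)` and `V = (L̄ / n) ∑ ‖g i‖² / L_i`, the choice of `p` makes the
stochastic correction unbiased and gives `E‖u' - u‖² = V`; expanding the square,
`‖u‖² - E‖u'‖² = -(2 / n) ∑ ⟪u, g i⟫ - V`. Since `x' - x = -η u`, co-coercivity of each gradient
(`gradient_cocoercive`) says `-η ⟪u, g i⟫ ≥ ‖g i‖² / L_i`, so the right-hand side is at least
`(2 / (η L̄) - 1) V`, which rearranges to the claim.

Co-coercivity follows from the first-order convexity inequality and the quadratic upper bound for
functions with Lipschitz gradient, compared at the point `y - L⁻¹ (∇f(y) - ∇f(x))`.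
-/

open scoped BigOperators

section Cocoercivity

variable {E : Type*} [NormedAddCommGroup E] [InnerProductSpace ℝ E] [CompleteSpace E]

lemma hasDerivAt_comp_line {f : E → ℝ} (hf : Differentiable ℝ f) (x v : E) (t : ℝ) :
    HasDerivAt (fun s : ℝ => f (x + s • v)) (inner ℝ (gradient f (x + t • v)) v) t := by
  have h1 : HasDerivAt (fun s : ℝ => x + s • v) v t := by
    simpa using ((hasDerivAt_id t).smul_const v).const_add x
  have h2 := (hf (x + t • v)).hasGradientAt.hasFDerivAt.comp_hasDerivAt t h1
  simpa [Function.comp_def] using h2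

/-- A differentiable convex function lies above its tangent planes. -/
lemma convex_first_order {f : E → ℝ} (hc : ConvexOn ℝ Set.univ f) (hf : Differentiable ℝ f)
    (x y : E) : f x + inner ℝ (gradient f x) (y - x) ≤ f y := by
  have hcl : ConvexOn ℝ Set.univ (fun t : ℝ => f (x + t • (y - x))) := by
    have := hc.comp_affineMap (AffineMap.lineMap (k := ℝ) x y)
    simpa [Function.comp_def, AffineMap.lineMap_apply, add_comm] using this
  have hd := hasDerivAt_comp_line hf x (y - x) 0
  have := hcl.le_slope_of_hasDerivAt (Set.mem_univ 0) (Set.mem_univ 1) one_pos hd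
  simp only [slope_def_field, zero_smul, add_zero, one_smul, add_sub_cancel, sub_zero,
    div_one] at this
  linarith

/-- The descent lemma: a function with `L`-Lipschitz gradient lies below its quadratic upper
model at every point. -/
lemma descent_upper_bound {f : E → ℝ} (hf : Differentiable ℝ f) {L : ℝ}
    (hlip : ∀ x y, ‖gradient f x - gradient f y‖ ≤ L * ‖x - y‖) (x v : E) :
    f (x + v) ≤ f x + inner ℝ (gradient f x) v + L / 2 * ‖v‖ ^ 2 := by
  -- The gap between `f` and its model along the segment has nonpositive derivative for `t ≥ 0`.
  let ψ : ℝ → ℝ := fun t =>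
    f (x + t • v) - t * inner ℝ (gradient f x) v - t ^ 2 * (L / 2 * ‖v‖ ^ 2)
  have hψ : ∀ t, HasDerivAt ψ (inner ℝ (gradient f (x + t • v)) v
      - inner ℝ (gradient f x) v - 2 * t * (L / 2 * ‖v‖ ^ 2)) t := by
    intro t
    have h1 := (hasDerivAt_id t).mul_const (inner ℝ (gradient f x) v)
    have h2 := (hasDerivAt_pow 2 t).mul_const (L / 2 * ‖v‖ ^ 2)
    refine (((hasDerivAt_comp_line hf x v t).sub h1).sub h2).congr_deriv ?_
    norm_num
  have hanti : AntitoneOn ψ (Set.Icc 0 1) := by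
    refine antitoneOn_of_deriv_nonpos (convex_Icc 0 1)
      (fun t _ => (hψ t).continuousAt.continuousWithinAt)
      (fun t _ => (hψ t).differentiableAt.differentiableWithinAt) fun t ht => ?_
    rw [interior_Icc] at ht
    rw [(hψ t).deriv, ← inner_sub_left]
    have h1 := real_inner_le_norm (gradient f (x + t • v) - gradient f x) v
    have h2 := hlip (x + t • v) x
    rw [add_sub_cancel_left, norm_smul, Real.norm_of_nonneg ht.1.le] at h2
    nlinarith [mul_le_mul_of_nonneg_right h2 (norm_nonneg v)]
  have := hanti (Set.left_mem_Icc.2 zero_le_one) (Set.right_mem_Icc.2 zero_le_one) zero_le_one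
  simp only [ψ, zero_smul, add_zero, one_smul, zero_mul, sub_zero, one_mul, one_pow, ne_eq,
    OfNat.ofNat_ne_zero, not_false_eq_true, zero_pow] at this
  linarith

/-- The Bregman distance of a convex function with `L`-Lipschitz gradient dominates the squared
gradient difference; this is the unsymmetrized form of co-coercivity. -/
lemma bregman_lower_bound {f : E → ℝ} (hc : ConvexOn ℝ Set.univ f) (hf : Differentiable ℝ f)
    {L : ℝ} (hL : 0 < L)
    (hlip : ∀ x y, ‖gradient f x - gradient f y‖ ≤ L * ‖x - y‖) (x y : E) :
    f x + inner ℝ (gradient f x) (y - x) + ‖gradient f y - gradient f x‖ ^ 2 / (2 * L) ≤ f y := by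
  set g := gradient f y - gradient f x with hg
  -- The point `y - L⁻¹ g` minimizes the quadratic model at `y` minus the tangent plane at `x`.
  have h1 := convex_first_order hc hf x (y + (-L⁻¹) • g)
  have h2 := descent_upper_bound hf hlip y ((-L⁻¹) • g)
  have e1 : y + (-L⁻¹) • g - x = (y - x) + (-L⁻¹) • g := by abel
  have e2 : inner ℝ (gradient f y) g - inner ℝ (gradient f x) g = ‖g‖ ^ 2 := by
    rw [← inner_sub_left, ← hg, real_inner_self_eq_norm_sq]
  rw [e1, inner_add_right, inner_smul_right] at h1
  rw [inner_smul_right, norm_smul, mul_pow, Real.norm_eq_abs, sq_abs] at h2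
  have e3 : L / 2 * ((-L⁻¹) ^ 2 * ‖g‖ ^ 2) = L⁻¹ * ‖g‖ ^ 2 / 2 := by field_simp
  have e4 : ‖g‖ ^ 2 / (2 * L) = L⁻¹ * ‖g‖ ^ 2 / 2 := by field_simp
  rw [e3] at h2
  rw [e4]
  have e5 := congrArg (L⁻¹ * ·) e2
  simp only [mul_sub] at e5
  linarith

lemma gradient_cocoercive {f : E → ℝ} (hc : ConvexOn ℝ Set.univ f) (hf : Differentiable ℝ f)
    {L : ℝ} (hL : 0 < L)
    (hlip : ∀ x y, ‖gradient f x - gradient f y‖ ≤ L * ‖x - y‖) (x y : E) :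
    ‖gradient f x - gradient f y‖ ^ 2 / L ≤ inner ℝ (gradient f x - gradient f y) (x - y) := by
  have h1 := bregman_lower_bound hc hf hL hlip x y
  have h2 := bregman_lower_bound hc hf hL hlip y x
  rw [norm_sub_rev (gradient f y)] at h1
  rw [← neg_sub x y, inner_neg_right] at h1
  rw [inner_sub_left]
  have e : ‖gradient f x - gradient f y‖ ^ 2 / L
      = 2 * (‖gradient f x - gradient f y‖ ^ 2 / (2 * L)) := by field_simp
  linarith

end Cocoercivity

/-- One-step bound for SARAH with importance sampling (convex case):
`E‖u' - u‖² ≤ (η L̄ / (2 - η L̄)) (‖u‖² - E‖u'‖²)`. -/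
theorem sarah_importance_sampling_step_convex {n d : ℕ} (hn : 0 < n)
    (f : Fin n → EuclideanSpace ℝ (Fin d) → ℝ)
    (L : Fin n → ℝ) (hL : ∀ i, 0 < L i)
    (hconv : ∀ i, ConvexOn ℝ Set.univ (f i))
    (hdiff : ∀ i, Differentiable ℝ (f i))
    (hlip : ∀ i x y, ‖gradient (f i) x - gradient (f i) y‖ ≤ L i * ‖x - y‖)
    (Lbar : ℝ) (hLbar : Lbar = (n : ℝ)⁻¹ * ∑ i, L i)
    (p : Fin n → ℝ) (hp : ∀ i, p i = L i / ∑ j, L j)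
    (x u : EuclideanSpace ℝ (Fin d))
    (η : ℝ) (hη0 : 0 < η) (hη : η < 2 / Lbar)
    (x' : EuclideanSpace ℝ (Fin d)) (hx' : x' = x - η • u) :
    ∑ i, p i *
        ‖(u + ((n : ℝ) * p i)⁻¹ • (gradient (f i) x' - gradient (f i) x)) - u‖ ^ 2
      ≤ (η * Lbar / (2 - η * Lbar)) *
        (‖u‖ ^ 2 - ∑ i, p i *
          ‖u + ((n : ℝ) * p i)⁻¹ • (gradient (f i) x' - gradient (f i) x)‖ ^ 2) := by
  have hn' : (0 : ℝ) < n := Nat.cast_pos.2 hn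
  have hS : 0 < ∑ i, L i :=
    Finset.sum_pos (fun i _ => hL i) ⟨⟨0, hn⟩, Finset.mem_univ _⟩
  have hLb : 0 < Lbar := by rw [hLbar]; positivity
  have hSL : ∑ i, L i = n * Lbar := by rw [hLbar]; field_simp
  have hηL : 0 < 2 - η * Lbar := by
    rw [lt_div_iff₀ hLb] at hη
    linarith
  have hpc : ∀ i, p i = L i / (n * Lbar) := fun i => by rw [hp, hSL]
  have hc : ∀ i, ((n : ℝ) * p i)⁻¹ = Lbar / L i := fun i => by
    rw [hpc]
    field_simp
  have hpsum : ∑ i, p i = 1 := by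
    simp_rw [hp, ← Finset.sum_div]
    exact div_self hS.ne'
  set g : Fin n → EuclideanSpace ℝ (Fin d) :=
    fun i => gradient (f i) x' - gradient (f i) x with hg
  have hcoc : ∀ i, ‖g i‖ ^ 2 / L i ≤ -(η * inner ℝ u (g i)) := by
    intro i
    have h := gradient_cocoercive (hconv i) (hdiff i) (hL i) (hlip i) x' x
    have e : x' - x = -(η • u) := by rw [hx']; abel
    rwa [e, inner_neg_right, inner_smul_right, real_inner_comm] at h
  have hvar : ∀ i, p i * ‖(u + ((n : ℝ) * p i)⁻¹ • g i) - u‖ ^ 2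
      = Lbar / n * (‖g i‖ ^ 2 / L i) := by
    intro i
    have := (hL i).ne'
    rw [add_sub_cancel_left, norm_smul, mul_pow, Real.norm_eq_abs, sq_abs, hc, hpc]
    field_simp
  have hsq : ∀ i, p i * ‖u + ((n : ℝ) * p i)⁻¹ • g i‖ ^ 2
      = p i * ‖u‖ ^ 2 + 2 / n * inner ℝ u (g i) + Lbar / n * (‖g i‖ ^ 2 / L i) := by
    intro i
    have := (hL i).ne'
    rw [← hvar, add_sub_cancel_left, norm_add_sq_real, inner_smul_right, hc, hpc]
    field_simp
  have hsum : ∑ i, ‖g i‖ ^ 2 / L i ≤ -(η * ∑ i, inner ℝ u (g i)) := by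
    rw [Finset.mul_sum, ← Finset.sum_neg_distrib]
    exact Finset.sum_le_sum fun i _ => hcoc i
  change ∑ i, p i * ‖(u + ((n : ℝ) * p i)⁻¹ • g i) - u‖ ^ 2
    ≤ (η * Lbar / (2 - η * Lbar)) *
      (‖u‖ ^ 2 - ∑ i, p i * ‖u + ((n : ℝ) * p i)⁻¹ • g i‖ ^ 2)
  simp_rw [hvar, hsq, Finset.sum_add_distrib, ← Finset.mul_sum, ← Finset.sum_mul]
  rw [hpsum, div_mul_eq_mul_div (η * Lbar), le_div_iff₀ hηL]
  set A := ∑ i, ‖g i‖ ^ 2 / L i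
  set B := ∑ i, inner ℝ u (g i)
  have key : Lbar / n * A * 2 ≤ Lbar / n * (-(η * B)) * 2 := by gcongr
  have e : η * Lbar * (‖u‖ ^ 2 - (1 * ‖u‖ ^ 2 + 2 / n * B + Lbar / n * A))
      = Lbar / n * (-(η * B)) * 2 - η * Lbar * (Lbar / n * A) := by ring
  rw [e]
  linarith
end

section
/- Let each f_i : R^d → R be convex and differentiable with L_i-Lipschitz gradient, let f = (1/n) Σ_{i=1}^n f_i be μ-strongly convex with μ > 0, let L̄ = (1/n) Σ_{i=1}^n L_i, and set the importance sampling probabilities p_i = L_i/(Σ_{j=1}^n L_j). Fix x, u ∈ R^d and a step size 0 < η < 2/L̄, set x' = x − η u, draw a single random index i ∈ [n] with Prob(i = j) = p_j, and define the SARAH update u' := u + (1/(n p_i))(∇f_i(x') − ∇f_i(x)). Then E‖u'‖² ≤ [ 1 − (2/(η L̄) − 1)·μ²η² ]·‖u‖², where the expectation is over the random index i. -/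
/-!
Write `gᵢ = ∇fᵢ(x') - ∇fᵢ(x)` and `G = n⁻¹ ∑ gᵢ`. Since `n pᵢ = Lᵢ / L̄`, expanding the square gives
`E‖u'‖² = ‖u‖² + 2⟪u, G⟫ + L̄ n⁻¹ ∑ ‖gᵢ‖² / Lᵢ`. Each `fᵢ` is convex and `Lᵢ`-smooth, so its gradient
is cocoercive (`cocoercive_gradient`): `‖gᵢ‖² / Lᵢ ≤ ⟪gᵢ, x' - x⟫ = -η ⟪gᵢ, u⟫`. With `a = -⟪u, G⟫`
this yields `E‖u'‖² ≤ ‖u‖² - (2 - η L̄) a`.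

It remains to see that `a ≥ μ² η / L̄ ‖u‖²`. Strong monotonicity of the gradient of the average
(`StrongConvexOn.strong_monotone_fderiv`) gives `a ≥ μ η ‖u‖²`, and the Lipschitz bounds give
`a ≤ L̄ η ‖u‖²`; hence `μ ‖u‖² ≤ L̄ ‖u‖²`, and the first bound implies the required one.
-/

open scoped BigOperators

section Auxiliary

variable {E : Type*} [NormedAddCommGroup E] [InnerProductSpace ℝ E]

/-- First-order characterisation of convexity: the graph lies above its tangent planes. -/
lemma ConvexOn.tangent_le_of_hasFDerivAt {f : E → ℝ} (hf : ConvexOn ℝ Set.univ f)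
    {f' : E →L[ℝ] ℝ} {x : E} (hx : HasFDerivAt f f' x) (y : E) :
    f x + f' (y - x) ≤ f y := by
  have hc : ConvexOn ℝ Set.univ (f ∘ AffineMap.lineMap (k := ℝ) x y) := by
    simpa using hf.comp_affineMap (AffineMap.lineMap (k := ℝ) x y)
  have hd : HasDerivAt (f ∘ AffineMap.lineMap (k := ℝ) x y) (f' (y - x)) 0 := by
    apply HasFDerivAt.comp_hasDerivAt
    · simpa using hx
    · exact AffineMap.hasDerivAt_lineMap
  have h := hc.le_slope_of_hasDerivAt (Set.mem_univ 0) (Set.mem_univ 1) one_pos hd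
  simp [slope_def_field] at h
  rw [map_sub]
  linarith

/-- The gradient of an `m`-strongly convex function is `m`-strongly monotone. -/
lemma StrongConvexOn.strong_monotone_fderiv {f : E → ℝ} {m : ℝ}
    (hf : StrongConvexOn Set.univ m f) {f'x f'y : E →L[ℝ] ℝ} {x y : E}
    (hx : HasFDerivAt f f'x x) (hy : HasFDerivAt f f'y y) :
    m * ‖y - x‖ ^ 2 ≤ f'y (y - x) - f'x (y - x) := by
  have hc := strongConvexOn_iff_convex.1 hf
  have hq : ∀ z : E, HasFDerivAt (fun z : E => m / 2 * ‖z‖ ^ 2)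
      ((m / 2) • (2 • innerSL ℝ z)) z := fun z =>
    (hasStrictFDerivAt_norm_sq z).hasFDerivAt.const_mul (m / 2)
  have h1 := hc.tangent_le_of_hasFDerivAt (hx.sub (hq x)) y
  have h2 := hc.tangent_le_of_hasFDerivAt (hy.sub (hq y)) x
  have e : f'y (x - y) = - f'y (y - x) := by rw [← map_neg, neg_sub]
  simp only [sub_apply, smul_apply, innerSL_apply_apply,
    smul_eq_mul, nsmul_eq_mul, e, inner_sub_right, real_inner_self_eq_norm_sq,
    real_inner_comm x y] at h1 h2
  rw [norm_sub_sq_real, real_inner_comm]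
  push_cast at h1 h2
  linarith

variable [CompleteSpace E]

/-- Descent lemma: a function with `L`-Lipschitz gradient lies below the quadratic
`z ↦ f y + ⟪∇f y, z - y⟫ + L / 2 * ‖z - y‖ ^ 2`. -/
lemma le_quadratic_of_lipschitz_gradient {f : E → ℝ} (hd : Differentiable ℝ f) {L : ℝ}
    (hlip : ∀ x y, ‖gradient f x - gradient f y‖ ≤ L * ‖x - y‖) (y v : E) :
    f (y + v) ≤ f y + inner ℝ (gradient f y) v + L / 2 * ‖v‖ ^ 2 := by
  -- the gap between `f` and the quadratic along the segment is nonincreasing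
  set ψ : ℝ → ℝ := fun t =>
    f (y + t • v) - t * inner ℝ (gradient f y) v - L / 2 * ‖v‖ ^ 2 * t ^ 2 with hψ
  have hder : ∀ t, HasDerivAt ψ (inner ℝ (gradient f (y + t • v)) v
      - inner ℝ (gradient f y) v - L / 2 * ‖v‖ ^ 2 * (2 * t)) t := by
    intro t
    have h1 : HasDerivAt (fun t : ℝ => f (y + t • v)) (inner ℝ (gradient f (y + t • v)) v) t := by
      have hl : HasDerivAt (fun t : ℝ => y + t • v) v t := by
        simpa using ((hasDerivAt_id t).smul_const v).const_add y
      have := (hd (y + t • v)).hasGradientAt.hasFDerivAt.comp_hasDerivAt t hl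
      rwa [InnerProductSpace.toDual_apply_apply] at this
    have h2 : HasDerivAt (fun t : ℝ => t * inner ℝ (gradient f y) v)
        (inner ℝ (gradient f y) v) t := by
      simpa using (hasDerivAt_id t).mul_const (inner ℝ (gradient f y) v)
    have h3 : HasDerivAt (fun t : ℝ => L / 2 * ‖v‖ ^ 2 * t ^ 2) (L / 2 * ‖v‖ ^ 2 * (2 * t)) t := by
      simpa using (hasDerivAt_pow 2 t).const_mul (L / 2 * ‖v‖ ^ 2)
    exact (h1.sub h2).sub h3
  have hanti : AntitoneOn ψ (Set.Icc 0 1) := by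
    apply antitoneOn_of_deriv_nonpos (convex_Icc 0 1)
    · exact fun t _ => (hder t).continuousAt.continuousWithinAt
    · exact fun t _ => (hder t).differentiableAt.differentiableWithinAt
    · intro t ht
      rw [interior_Icc] at ht
      rw [(hder t).deriv, ← inner_sub_left]
      have h1 := real_inner_le_norm (gradient f (y + t • v) - gradient f y) v
      have h2 := hlip (y + t • v) y
      rw [add_sub_cancel_left, norm_smul, Real.norm_of_nonneg ht.1.le] at h2
      have h3 := mul_le_mul_of_nonneg_right h2 (norm_nonneg v)
      nlinarith
  have h := hanti (Set.left_mem_Icc.2 zero_le_one) (Set.right_mem_Icc.2 zero_le_one) zero_le_one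
  simp only [hψ, one_smul, zero_smul, add_zero] at h
  linarith

/-- Lower bound on a convex `L`-smooth function that sharpens the tangent inequality. -/
lemma tangent_add_norm_sq_le {f : E → ℝ} (hf : ConvexOn ℝ Set.univ f) (hd : Differentiable ℝ f)
    {L : ℝ} (hL : 0 < L) (hlip : ∀ x y, ‖gradient f x - gradient f y‖ ≤ L * ‖x - y‖) (x y : E) :
    f x + inner ℝ (gradient f x) (y - x) + ‖gradient f y - gradient f x‖ ^ 2 / (2 * L) ≤ f y := by
  set g := gradient f y - gradient f x with hg
  -- compare the tangent plane at `x` with the quadratic upper bound at `y` at the point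
  -- `y - L⁻¹ • g`, where their difference is minimal
  have h1 := hf.tangent_le_of_hasFDerivAt (hd x).hasGradientAt.hasFDerivAt (y + (-L⁻¹) • g)
  have h2 := le_quadratic_of_lipschitz_gradient hd hlip y ((-L⁻¹) • g)
  have h3 : inner ℝ (gradient f y) g - inner ℝ (gradient f x) g = ‖g‖ ^ 2 := by
    rw [← inner_sub_left, ← hg, real_inner_self_eq_norm_sq]
  rw [InnerProductSpace.toDual_apply_apply, add_sub_right_comm, inner_add_right,
    inner_smul_right] at h1
  rw [inner_smul_right, norm_smul, mul_pow, Real.norm_eq_abs, sq_abs] at h2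
  have h4 : L / 2 * ((-L⁻¹) ^ 2 * ‖g‖ ^ 2) = L⁻¹ * ‖g‖ ^ 2 / 2 := by field_simp
  have h5 : ‖g‖ ^ 2 / (2 * L) = L⁻¹ * ‖g‖ ^ 2 / 2 := by field_simp
  rw [h4] at h2
  rw [h5]
  have h6 := congrArg (fun r => L⁻¹ * r) h3
  simp only [mul_sub] at h6
  linarith

/-- Baillon–Haddad: the gradient of a convex `L`-smooth function is `1 / L`-cocoercive. -/
lemma cocoercive_gradient {f : E → ℝ} (hf : ConvexOn ℝ Set.univ f) (hd : Differentiable ℝ f)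
    {L : ℝ} (hL : 0 < L) (hlip : ∀ x y, ‖gradient f x - gradient f y‖ ≤ L * ‖x - y‖) (x y : E) :
    ‖gradient f y - gradient f x‖ ^ 2 / L ≤ inner ℝ (gradient f y - gradient f x) (y - x) := by
  have h1 := tangent_add_norm_sq_le hf hd hL hlip x y
  have h2 := tangent_add_norm_sq_le hf hd hL hlip y x
  rw [norm_sub_rev, ← neg_sub y x, inner_neg_right] at h2
  have h3 : ‖gradient f y - gradient f x‖ ^ 2 / L
      = 2 * (‖gradient f y - gradient f x‖ ^ 2 / (2 * L)) := by field_simp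
  rw [inner_sub_left, h3]
  linarith

end Auxiliary

/-- Linear decrease of the SARAH estimator norm with importance sampling when the
average `f` is `μ`-strongly convex: `E‖u'‖² ≤ (1 - (2/(η L̄) - 1) μ² η²) ‖u‖²`. -/
theorem sarah_importance_sampling_step_strongly_convex_average {n d : ℕ} (hn : 0 < n)
    (f : Fin n → EuclideanSpace ℝ (Fin d) → ℝ)
    (L : Fin n → ℝ) (hL : ∀ i, 0 < L i)
    (hconv : ∀ i, ConvexOn ℝ Set.univ (f i))
    (hdiff : ∀ i, Differentiable ℝ (f i))
    (hlip : ∀ i x y, ‖gradient (f i) x - gradient (f i) y‖ ≤ L i * ‖x - y‖)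
    (F : EuclideanSpace ℝ (Fin d) → ℝ)
    (hF : F = fun y => (n : ℝ)⁻¹ * ∑ i, f i y)
    (μ : ℝ) (hμ : 0 < μ) (hsc : StrongConvexOn Set.univ μ F)
    (Lbar : ℝ) (hLbar : Lbar = (n : ℝ)⁻¹ * ∑ i, L i)
    (p : Fin n → ℝ) (hp : ∀ i, p i = L i / ∑ j, L j)
    (x u : EuclideanSpace ℝ (Fin d))
    (η : ℝ) (hη0 : 0 < η) (hη : η < 2 / Lbar)
    (x' : EuclideanSpace ℝ (Fin d)) (hx' : x' = x - η • u) :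
    ∑ i, p i *
        ‖u + ((n : ℝ) * p i)⁻¹ • (gradient (f i) x' - gradient (f i) x)‖ ^ 2
      ≤ (1 - (2 / (η * Lbar) - 1) * μ ^ 2 * η ^ 2) * ‖u‖ ^ 2 := by
  have : NeZero n := ⟨hn.ne'⟩
  have hn' : (0 : ℝ) < n := by exact_mod_cast hn
  have hS : 0 < ∑ i, L i := Finset.sum_pos (fun i _ => hL i) Finset.univ_nonempty
  have hLb : 0 < Lbar := by rw [hLbar]; positivity
  have hSL : ∑ i, L i = n * Lbar := by rw [hLbar]; field_simp
  set g : Fin n → EuclideanSpace ℝ (Fin d) := fun i => gradient (f i) x' - gradient (f i) x with hg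
  have hxx : x' - x = (-η) • u := by rw [hx']; module
  -- `a` is `-⟪u, G⟫`
  set a : ℝ := -((n : ℝ)⁻¹ * ∑ i, inner ℝ u (g i)) with ha
  have hterm : ∀ i, p i * ‖u + ((n : ℝ) * p i)⁻¹ • g i‖ ^ 2
      ≤ p i * ‖u‖ ^ 2 + (2 - η * Lbar) * ((n : ℝ)⁻¹ * inner ℝ u (g i)) := by
    intro i
    have hc := cocoercive_gradient (hconv i) (hdiff i) (hL i) (hlip i) x x'
    rw [hxx, inner_smul_right, real_inner_comm] at hc
    change ‖g i‖ ^ 2 / L i ≤ -η * inner ℝ u (g i) at hc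
    have hLi := hL i
    have hpi : p i = L i / (n * Lbar) := by rw [hp, hSL]
    have hp0 : 0 < p i := by rw [hpi]; positivity
    rw [norm_add_sq_real, inner_smul_right, norm_smul, mul_pow, Real.norm_eq_abs, sq_abs]
    have e : p i * (‖u‖ ^ 2 + 2 * (((n : ℝ) * p i)⁻¹ * inner ℝ u (g i))
        + ((n : ℝ) * p i)⁻¹ ^ 2 * ‖g i‖ ^ 2)
        = p i * ‖u‖ ^ 2 + 2 * ((n : ℝ)⁻¹ * inner ℝ u (g i))
          + Lbar * (n : ℝ)⁻¹ * (‖g i‖ ^ 2 / L i) := by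
      rw [hpi]; field_simp
    rw [e]
    have := mul_le_mul_of_nonneg_left hc (by positivity : 0 ≤ Lbar * (n : ℝ)⁻¹)
    linarith
  have hpsum : ∑ i, p i = 1 := by
    simp_rw [hp]; rw [← Finset.sum_div]; exact div_self hS.ne'
  have hmain : ∑ i, p i * ‖u + ((n : ℝ) * p i)⁻¹ • g i‖ ^ 2
      ≤ ‖u‖ ^ 2 - (2 - η * Lbar) * a := by
    refine (Finset.sum_le_sum fun i _ => hterm i).trans_eq ?_
    rw [Finset.sum_add_distrib, ← Finset.sum_mul, hpsum, ← Finset.mul_sum, ← Finset.mul_sum, ha]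
    ring
  have hFd : ∀ z, HasFDerivAt F ((n : ℝ)⁻¹ • ∑ i, fderiv ℝ (f i) z) z := by
    intro z
    rw [hF]
    exact (HasFDerivAt.fun_sum fun i _ => (hdiff i z).hasFDerivAt).const_mul _
  have hfi : ∀ i z v, fderiv ℝ (f i) z v = inner ℝ (gradient (f i) z) v := by
    intro i z v
    rw [(hdiff i z).hasGradientAt.hasFDerivAt.fderiv]; simp
  have hlow : μ * η * ‖u‖ ^ 2 ≤ a := by
    have h := hsc.strong_monotone_fderiv (hFd x) (hFd x')
    simp only [smul_apply, sum_apply, hfi,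
      smul_eq_mul] at h
    rw [← mul_sub, ← Finset.sum_sub_distrib, hxx, norm_smul, mul_pow, Real.norm_eq_abs,
      sq_abs] at h
    have e : (n : ℝ)⁻¹ * ∑ i, (inner ℝ (gradient (f i) x') ((-η) • u)
        - inner ℝ (gradient (f i) x) ((-η) • u)) = η * a := by
      have : ∀ i, inner ℝ (gradient (f i) x') ((-η) • u)
        - inner ℝ (gradient (f i) x) ((-η) • u) = -η * inner ℝ u (g i) := by
        intro i
        rw [← inner_sub_left, inner_smul_right, real_inner_comm]
      simp_rw [this]
      rw [← Finset.mul_sum, ha]; ring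
    rw [e] at h
    refine le_of_mul_le_mul_left ?_ hη0
    linarith
  have hup : a ≤ Lbar * η * ‖u‖ ^ 2 := by
    have hi : ∀ i, -inner ℝ u (g i) ≤ L i * (η * ‖u‖ ^ 2) := by
      intro i
      have h1 := hlip i x' x
      rw [hxx, norm_smul, norm_neg, Real.norm_of_nonneg hη0.le] at h1
      have h2 := (abs_le.1 (abs_real_inner_le_norm u (g i))).1
      have h3 := mul_le_mul_of_nonneg_left h1 (norm_nonneg u)
      change ‖u‖ * ‖g i‖ ≤ _ at h3
      linarith
    have h := Finset.sum_le_sum fun i (_ : i ∈ Finset.univ) => hi i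
    rw [Finset.sum_neg_distrib, ← Finset.sum_mul] at h
    have := mul_le_mul_of_nonneg_left h (inv_pos.2 hn').le
    rw [ha, hLbar]
    linarith
  refine hmain.trans ?_
  have hηL : η * Lbar < 2 := (lt_div_iff₀ hLb).1 hη
  have hμL : μ * ‖u‖ ^ 2 ≤ Lbar * ‖u‖ ^ 2 :=
    le_of_mul_le_mul_left (by linarith [hlow.trans hup]) hη0
  have hkey : μ ^ 2 * η / Lbar * ‖u‖ ^ 2 ≤ a := by
    refine le_trans ?_ hlow
    rw [div_mul_eq_mul_div, div_le_iff₀ hLb]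
    have := mul_le_mul_of_nonneg_left hμL (mul_pos hμ hη0).le
    linarith
  have hfin := mul_le_mul_of_nonneg_left hkey (sub_nonneg.2 hηL.le)
  have e : (1 - (2 / (η * Lbar) - 1) * μ ^ 2 * η ^ 2) * ‖u‖ ^ 2
      = ‖u‖ ^ 2 - (2 - η * Lbar) * (μ ^ 2 * η / Lbar * ‖u‖ ^ 2) := by
    field_simp
  rw [e]
  linarith
end
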